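/- Let w ≥ 5 be an integer. Then Σ_{a+b+c+d=w, a≥2, b,c,d≥1} 2^{a+c}·(2^{a−1}·3^b − 3^b − 1)·ζ(a,b,c,d) = (2 + (w−3)(w+2)(w+7)/12)·ζ(w). -/

import Mathlib

/-- The multiple zeta value `ζ(s₁,…,s_d) = Σ_{k₁>⋯>k_d≥1} 1/(k₁^{s₁}⋯k_d^{s_d})`. -/
noncomputable def mzv {d : ℕ} (s : Fin d → ℕ) : ℝ :=
  ∑' k : {k : Fin d → ℕ // StrictAnti k ∧ ∀ i, 0 < k i},
    ∏ i, (1 : ℝ) / (k.1 i : ℝ) ^ s i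

section

open Finset

/-! Basic tools on sums -/

theorem swap_summable {α β : Type*} {f : α → β → ℝ} {g : α → ℝ} {s : ℝ}
    (h0 : ∀ a b, 0 ≤ f a b) (h1 : ∀ a, HasSum (f a) (g a)) (h2 : HasSum g s) :
    HasSum (fun z : α × β => f z.1 z.2) s := by
  have hs : Summable (fun z : α × β => f z.1 z.2) := by
    rw [summable_prod_of_nonneg (fun z => h0 z.1 z.2)]
    refine ⟨fun a => (h1 a).summable, ?_⟩
    have : (fun a => ∑' b, f a b) = g := funext fun a => (h1 a).tsum_eq
    simpa [this] using h2.summable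
  have := hs.hasSum.prod_fiberwise (fun a => h1 a)
  rw [h2.unique this]
  exact hs.hasSum

theorem swap_hasSum {α β : Type*} {f : α → β → ℝ} {g : α → ℝ} {s : ℝ} {k : β → ℝ}
    (h0 : ∀ a b, 0 ≤ f a b) (h1 : ∀ a, HasSum (f a) (g a)) (h2 : HasSum g s)
    (h3 : ∀ b, HasSum (fun a => f a b) (k b)) : HasSum k s := by
  have h := swap_summable h0 h1 h2
  have h' : HasSum (fun z : β × α => f z.2 z.1) s :=
    (Equiv.prodComm β α).hasSum_iff.mpr h
  exact h'.prod_fiberwise h3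

theorem swap_hasSum' {α β : Type*} {f : α → β → ℝ} {g : α → ℝ} {s : ℝ}
    (h0 : ∀ a b, 0 ≤ f a b) (h1 : ∀ a, HasSum (f a) (g a)) (h2 : HasSum g s) :
    (∀ b, Summable (fun a => f a b)) ∧ HasSum (fun b => ∑' a, f a b) s := by
  have h := swap_summable h0 h1 h2
  have h' : HasSum (fun z : β × α => f z.2 z.1) s :=
    (Equiv.prodComm β α).hasSum_iff.mpr h
  have hc : ∀ b, Summable (fun a => f a b) := fun b => h'.summable.prod_factor b
  exact ⟨hc, h'.prod_fiberwise (fun b => (hc b).hasSum)⟩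

/-- strict partial sums -/
def pre (f : ℕ → ℝ) (n : ℕ) : ℝ := ∑ k ∈ range n, f k

@[simp] theorem pre_zero (f : ℕ → ℝ) : pre f 0 = 0 := by simp [pre]
theorem pre_succ (f : ℕ → ℝ) (n : ℕ) : pre f (n + 1) = pre f n + f n := by
  simp [pre, sum_range_succ]
theorem pre_nonneg {f : ℕ → ℝ} (h : ∀ n, 0 ≤ f n) (n : ℕ) : 0 ≤ pre f n :=
  sum_nonneg fun k _ => h k

/-- sum over `k < n` of products, tail to head. -/
theorem pre_hasSum_indicator (f : ℕ → ℝ) (n : ℕ) :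
    HasSum (fun k => if k < n then f k else 0) (pre f n) := by
  have : HasSum (fun k => if k < n then f k else 0) (∑ k ∈ range n, if k < n then f k else 0) :=
    hasSum_sum_of_ne_finset_zero (by intro b hb; simp at hb; simp [hb])
  convert this using 1
  unfold pre
  apply sum_congr rfl
  intro k hk
  simp at hk
  simp [hk]

/-- product of two series as a single series over the top index. -/
theorem hasSum_prod_top {f g : ℕ → ℝ} {a b : ℝ} (hf : HasSum f a) (hg : HasSum g b) :
    Filter.Tendsto (fun N => pre (fun n => f n * pre g n + g n * pre f n + f n * g n) N)
      Filter.atTop (nhds (a * b)) := by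
  have h : ∀ N, pre (fun n => f n * pre g n + g n * pre f n + f n * g n) N = pre f N * pre g N := by
    intro N
    induction N with
    | zero => simp
    | succ n ih => simp only [pre_succ, ih]; ring
  simp only [h]
  exact hf.tendsto_sum_nat.mul hg.tendsto_sum_nat

/-- antidiagonal regrouping -/
theorem hasSum_antidiag {f : ℕ → ℕ → ℝ} {s : ℝ} (h : HasSum (fun z : ℕ × ℕ => f z.1 z.2) s) :
    HasSum (fun n => ∑ z ∈ antidiagonal n, f z.1 z.2) s := by
  have h1 := (Finset.HasAntidiagonal.sigmaAntidiagonalEquivProd (A := ℕ)).hasSum_iff.mpr h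
  have h2 := h1.sigma (g := fun n => ∑ z ∈ antidiagonal n, f z.1 z.2) (fun n => by
    have := hasSum_fintype (fun z : antidiagonal n => f z.1.1 z.1.2)
    rw [Finset.sum_coe_sort (antidiagonal n) (fun z => f z.1 z.2)] at this
    exact this)
  exact h2

theorem HasSum.cg {ι : Type*} {f g : ι → ℝ} {a b : ℝ} (h : HasSum f a) (hf : ∀ n, g n = f n)
    (hab : b = a) : HasSum g b := by
  have : g = f := funext hf
  rw [this, hab]; exact h

end

section

open Finset

/-! Letters and growth bounds -/

noncomputable def Pc (c x : ℝ) (n : ℕ) : ℝ := 1 / ((n : ℝ) + 1 - c * x)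
noncomputable def Pp (x : ℝ) (n : ℕ) : ℝ := 1 / ((n : ℝ) + 1 - x)
noncomputable def Qq (n : ℕ) : ℝ := 1 / ((n : ℝ) + 1)
noncomputable def Dd (x : ℝ) (n : ℕ) : ℝ := Pp x n - Qq n
noncomputable def Ll (n : ℕ) : ℝ := 1 + pre Qq n

def Iv : Set ℝ := Set.Ioo 0 (1 / 5)

theorem Qq_pos (n : ℕ) : 0 < Qq n := by unfold Qq; positivity
theorem Qq_le_one (n : ℕ) : Qq n ≤ 1 := by
  unfold Qq; rw [div_le_one (by positivity)]
  have : (0 : ℝ) ≤ n := n.cast_nonneg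
  linarith
theorem Ll_one_le (n : ℕ) : 1 ≤ Ll n := by
  unfold Ll; have := pre_nonneg (fun n => (Qq_pos n).le) n; linarith
theorem Ll_mono {m n : ℕ} (h : m ≤ n) : Ll m ≤ Ll n := by
  unfold Ll pre
  have : ∑ k ∈ range m, Qq k ≤ ∑ k ∈ range n, Qq k :=
    sum_le_sum_of_subset_of_nonneg (by simpa using h) (fun i _ _ => (Qq_pos i).le)
  linarith

def Bd (i j : ℕ) (f : ℝ → ℕ → ℝ) : Prop :=
  ∃ C : ℝ, 0 ≤ C ∧ ∀ x ∈ Iv, ∀ n, |f x n| ≤ C * (Qq n ^ i * Ll n ^ j)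

theorem Bd.mul {i j i' j' : ℕ} {f g : ℝ → ℕ → ℝ} (hf : Bd i j f) (hg : Bd i' j' g) :
    Bd (i + i') (j + j') (fun x n => f x n * g x n) := by
  obtain ⟨C, hC, h⟩ := hf
  obtain ⟨C', hC', h'⟩ := hg
  refine ⟨C * C', by positivity, fun x hx n => ?_⟩
  rw [abs_mul]
  calc _ ≤ (C * (Qq n ^ i * Ll n ^ j)) * (C' * (Qq n ^ i' * Ll n ^ j')) :=
        mul_le_mul (h x hx n) (h' x hx n) (abs_nonneg _) ((abs_nonneg _).trans (h x hx n))
    _ = _ := by rw [pow_add, pow_add]; ring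

theorem Bd.add {i j : ℕ} {f g : ℝ → ℕ → ℝ} (hf : Bd i j f) (hg : Bd i j g) :
    Bd i j (fun x n => f x n + g x n) := by
  obtain ⟨C, hC, h⟩ := hf
  obtain ⟨C', hC', h'⟩ := hg
  refine ⟨C + C', by positivity, fun x hx n => ?_⟩
  rw [add_mul]
  exact (abs_add_le _ _).trans (add_le_add (h x hx n) (h' x hx n))

theorem Bd.neg {i j : ℕ} {f : ℝ → ℕ → ℝ} (hf : Bd i j f) : Bd i j (fun x n => - f x n) := by
  obtain ⟨C, hC, h⟩ := hf
  exact ⟨C, hC, fun x hx n => by rw [abs_neg]; exact h x hx n⟩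

theorem Bd.sub {i j : ℕ} {f g : ℝ → ℕ → ℝ} (hf : Bd i j f) (hg : Bd i j g) :
    Bd i j (fun x n => f x n - g x n) := by
  simpa only [sub_eq_add_neg] using hf.add hg.neg

theorem Bd.const (c : ℝ) : Bd 0 0 (fun _ _ => c) :=
  ⟨|c|, abs_nonneg _, fun x _ n => by simp⟩

theorem Bd.cmul {i j : ℕ} {f : ℝ → ℕ → ℝ} (c : ℝ) (hf : Bd i j f) :
    Bd i j (fun x n => c * f x n) := by
  simpa using (Bd.const c).mul hf

theorem Bd.mono {i j i' j' : ℕ} {f : ℝ → ℕ → ℝ} (hf : Bd i j f) (hi : i' ≤ i) (hj : j ≤ j') :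
    Bd i' j' f := by
  obtain ⟨C, hC, h⟩ := hf
  refine ⟨C, hC, fun x hx n => (h x hx n).trans ?_⟩
  have h1 := pow_le_pow_of_le_one (Qq_pos n).le (Qq_le_one n) hi
  have h2 := pow_le_pow_right₀ (Ll_one_le n) hj
  have h3 := Ll_one_le n
  have h4 := Qq_pos n
  gcongr

theorem Bd.pre {j : ℕ} {f : ℝ → ℕ → ℝ} (hf : Bd 1 j f) :
    Bd 0 (j + 1) (fun x n => pre (f x) n) := by
  obtain ⟨C, hC, h⟩ := hf
  refine ⟨C, hC, fun x hx n => ?_⟩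
  have hL := Ll_one_le n
  calc |_root_.pre (f x) n| ≤ ∑ k ∈ range n, |f x k| := abs_sum_le_sum_abs _ _
    _ ≤ ∑ k ∈ range n, C * (Qq k * Ll n ^ j) := by
        apply sum_le_sum
        intro k hk
        refine (h x hx k).trans ?_
        have h1 : Ll k ≤ Ll n := Ll_mono (by simp at hk; omega)
        have h2 := Ll_one_le k
        have h4 := Qq_pos k
        rw [pow_one]
        gcongr
    _ = C * Ll n ^ j * _root_.pre Qq n := by
        unfold _root_.pre; rw [mul_sum]; apply sum_congr rfl; intros; ring
    _ ≤ C * Ll n ^ j * Ll n := by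
        gcongr; unfold Ll; linarith
    _ = _ := by rw [pow_succ]; ring

theorem Bd.congr {i j : ℕ} {f g : ℝ → ℕ → ℝ} (hf : Bd i j f)
    (h : ∀ x ∈ Iv, ∀ n, f x n = g x n) : Bd i j g := by
  obtain ⟨C, hC, h'⟩ := hf
  exact ⟨C, hC, fun x hx n => by rw [← h x hx n]; exact h' x hx n⟩

theorem Bd.of_le {i j : ℕ} {f g : ℝ → ℕ → ℝ} (hf : Bd i j f)
    (h : ∀ x ∈ Iv, ∀ n, |g x n| ≤ f x n) : Bd i j g := by
  obtain ⟨C, hC, h'⟩ := hf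
  exact ⟨C, hC, fun x hx n => (h x hx n).trans ((le_abs_self _).trans (h' x hx n))⟩

theorem Qq_bd : Bd 1 0 (fun _ => Qq) :=
  ⟨1, by norm_num, fun x _ n => by rw [abs_of_pos (Qq_pos n)]; simp⟩

theorem Pc_den {c x : ℝ} (hc0 : 0 ≤ c) (hc : c ≤ 4) (hx : x ∈ Iv) (n : ℕ) :
    ((n : ℝ) + 1) / 5 ≤ (n : ℝ) + 1 - c * x := by
  obtain ⟨h1, h2⟩ := hx
  have hn : (0 : ℝ) ≤ n := n.cast_nonneg
  have : c * x ≤ 4 * (1 / 5) := by gcongr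
  linarith

theorem Pc_pos {c x : ℝ} (hc0 : 0 ≤ c) (hc : c ≤ 4) (hx : x ∈ Iv) (n : ℕ) : 0 < Pc c x n := by
  have := Pc_den hc0 hc hx n
  have hn : (0 : ℝ) < ((n : ℝ) + 1) / 5 := by positivity
  unfold Pc; apply one_div_pos.mpr; linarith

theorem Pc_le {c x : ℝ} (hc0 : 0 ≤ c) (hc : c ≤ 4) (hx : x ∈ Iv) (n : ℕ) : Pc c x n ≤ 5 * Qq n := by
  have := Pc_den hc0 hc hx n
  have hn : (0 : ℝ) < ((n : ℝ) + 1) / 5 := by positivity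
  calc Pc c x n ≤ 1 / (((n : ℝ) + 1) / 5) := by unfold Pc; gcongr
    _ = _ := by unfold Qq; field_simp

theorem Pc_bd {c : ℝ} (hc0 : 0 ≤ c) (hc : c ≤ 4) : Bd 1 0 (Pc c) :=
  ⟨5, by norm_num, fun x hx n => by
    rw [abs_of_pos (Pc_pos hc0 hc hx n)]; simpa using Pc_le hc0 hc hx n⟩

theorem Pp_eq (x : ℝ) : Pp x = Pc 1 x := by funext n; simp [Pp, Pc]
theorem Qq_eq (x : ℝ) : Qq = Pc 0 x := by funext n; simp [Qq, Pc]

theorem Pp_pos {x : ℝ} (hx : x ∈ Iv) (n : ℕ) : 0 < Pp x n := by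
  rw [Pp_eq]; exact Pc_pos (by norm_num) (by norm_num) hx n

theorem Pp_bd : Bd 1 0 Pp :=
  (Pc_bd (c := 1) (by norm_num) (by norm_num)).congr (fun x _ n => by rw [Pp_eq])

theorem Pp_den {x : ℝ} (hx : x ∈ Iv) (n : ℕ) : (0 : ℝ) < (n : ℝ) + 1 - x := by
  have hn : (0 : ℝ) ≤ n := n.cast_nonneg
  have := hx.2
  linarith

theorem Pc_sub {c e x : ℝ} (hc0 : 0 ≤ c) (hc : c ≤ 4) (he0 : 0 ≤ e) (he : e ≤ 4) (hx : x ∈ Iv) (n : ℕ) :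
    Pc c x n - Pc e x n = (c - e) * x * (Pc c x n * Pc e x n) := by
  have h1 := Pc_den hc0 hc hx n
  have h2 := Pc_den he0 he hx n
  have hn : (0 : ℝ) < ((n : ℝ) + 1) / 5 := by positivity
  have h3 : (n : ℝ) + 1 - c * x ≠ 0 := by linarith
  have h4 : (n : ℝ) + 1 - e * x ≠ 0 := by linarith
  unfold Pc; rw [div_sub_div _ _ h3 h4, one_div_mul_one_div, mul_one_div]; congr 1; ring

theorem Pc_sub_bd {c e : ℝ} (hc0 : 0 ≤ c) (hc : c ≤ 4) (he0 : 0 ≤ e) (he : e ≤ 4) :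
    Bd 2 0 (fun x n => Pc c x n - Pc e x n) := by
  have hX : Bd 0 0 (fun x _ => x) := ⟨1, by norm_num, fun x hx n => by
    rw [abs_of_pos hx.1]; have := hx.2; norm_num; linarith⟩
  have := ((Bd.const (c - e)).mul hX).mul ((Pc_bd hc0 hc).mul (Pc_bd he0 he))
  exact this.congr (fun x hx n => (Pc_sub hc0 hc he0 he hx n).symm)

theorem Dd_eq {x : ℝ} (hx : x ∈ Iv) (n : ℕ) : Dd x n = x * (Pp x n * Qq n) := by
  unfold Dd; rw [Pp_eq, Qq_eq x, Pc_sub (by norm_num) (by norm_num) (by norm_num) (by norm_num) hx]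
  ring

theorem Dd_pos {x : ℝ} (hx : x ∈ Iv) (n : ℕ) : 0 < Dd x n := by
  rw [Dd_eq hx]; exact mul_pos hx.1 (mul_pos (Pp_pos hx n) (Qq_pos n))

theorem Dd_bd : Bd 2 0 Dd :=
  (Pc_sub_bd (c := 1) (e := 0) (by norm_num) (by norm_num) (by norm_num) (by norm_num)).congr
    (fun x _ n => by unfold Dd; rw [Pp_eq, Qq_eq x])

theorem Ll_le (n : ℕ) : Ll n ≤ 10 * ((n : ℝ) + 1) ^ (1 / 8 : ℝ) := by
  have h1 : pre Qq n = (harmonic n : ℝ) := by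
    unfold pre Qq harmonic
    push_cast
    apply sum_congr rfl; intros; simp
  have h2 : (harmonic n : ℝ) ≤ 1 + Real.log n := harmonic_le_one_add_log n
  have h3 : Real.log n ≤ Real.log ((n : ℝ) + 1) := by
    rcases Nat.eq_zero_or_pos n with h | h
    · subst h; simp
    · apply Real.log_le_log (by exact_mod_cast h) (by linarith)
  have hn : (0 : ℝ) ≤ n := n.cast_nonneg
  have h4 : Real.log ((n : ℝ) + 1) ≤ ((n : ℝ) + 1) ^ (1 / 8 : ℝ) / (1 / 8) :=
    Real.log_le_rpow_div (by positivity) (by norm_num)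
  have h5 : (1 : ℝ) ≤ ((n : ℝ) + 1) ^ (1 / 8 : ℝ) := Real.one_le_rpow (by linarith) (by norm_num)
  unfold Ll; rw [h1]; linarith

theorem base_summable : Summable (fun n => Qq n ^ 2 * Ll n ^ 4) := by
  have h0 : Summable (fun n : ℕ => 1 / ((n : ℝ)) ^ (3 / 2 : ℝ)) :=
    Real.summable_one_div_nat_rpow.mpr (by norm_num)
  have h1 := ((summable_nat_add_iff 1).mpr h0).mul_left (10 ^ 4 : ℝ)
  refine Summable.of_nonneg_of_le (fun n => ?_) (fun n => ?_) h1
  · have := Ll_one_le n; have := Qq_pos n; positivity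
  · have hp : (0 : ℝ) < (n : ℝ) + 1 := by positivity
    have h2 := Ll_le n
    have h3 := Ll_one_le n
    have h4 : Ll n ^ 4 ≤ (10 * ((n : ℝ) + 1) ^ (1 / 8 : ℝ)) ^ 4 := by gcongr
    have h5 : (((n : ℝ) + 1) ^ (1 / 8 : ℝ)) ^ 4 = ((n : ℝ) + 1) ^ (1 / 2 : ℝ) := by
      rw [← Real.rpow_natCast, ← Real.rpow_mul hp.le]; norm_num
    have h6 : ((n : ℝ) + 1) ^ 2 = ((n : ℝ) + 1) ^ (1 / 2 : ℝ) * ((n : ℝ) + 1) ^ (3 / 2 : ℝ) := by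
      rw [← Real.rpow_add hp, ← Real.rpow_natCast]; norm_num
    rw [mul_pow, h5] at h4
    push_cast
    calc Qq n ^ 2 * Ll n ^ 4 ≤ Qq n ^ 2 * (10 ^ 4 * ((n : ℝ) + 1) ^ (1 / 2 : ℝ)) := by
          have := Qq_pos n; gcongr
      _ = _ := by
          unfold Qq
          rw [div_pow, h6]
          have ha : 0 < ((n : ℝ) + 1) ^ (1 / 2 : ℝ) := by positivity
          have hb : 0 < ((n : ℝ) + 1) ^ (3 / 2 : ℝ) := by positivity
          field_simp

theorem Bd.summable {i j : ℕ} {f : ℝ → ℕ → ℝ} (hf : Bd i j f) (hi : 2 ≤ i) (hj : j ≤ 4)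
    {x : ℝ} (hx : x ∈ Iv) : Summable (f x) := by
  obtain ⟨C, hC, h⟩ := hf.mono hi hj
  exact Summable.of_norm_bounded (base_summable.mul_left C) (fun n => h x hx n)

theorem isOpen_Iv : IsOpen Iv := isOpen_Ioo

/-- termwise differentiation of a vanishing series -/
theorem derivSer_zero {f f' : ℝ → ℕ → ℝ} {i j : ℕ} (hb : Bd i j f') (hi : 2 ≤ i) (hj : j ≤ 4)
    (hd : ∀ x ∈ Iv, ∀ n, HasDerivAt (fun y => f y n) (f' x n) x)
    (h0 : ∀ x ∈ Iv, HasSum (f x) 0) : ∀ x ∈ Iv, HasSum (f' x) 0 := by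
  intro x hx
  have hsum := hb.summable hi hj hx
  obtain ⟨C, hC, h⟩ := hb.mono hi hj
  have key := hasDerivAt_tsum_of_isPreconnected (u := fun n => C * (Qq n ^ 2 * Ll n ^ 4))
    (g := fun n y => f y n) (g' := fun n y => f' y n) (t := Iv) (y₀ := x) (y := x)
    (base_summable.mul_left C) isOpen_Iv isPreconnected_Ioo
    (fun n y hy => hd y hy n) (fun n y hy => h y hy n) hx (h0 x hx).summable hx
  have h2 : HasDerivAt (fun z => ∑' n, f z n) 0 x := by
    apply (hasDerivAt_const x (0 : ℝ)).congr_of_eventuallyEq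
    filter_upwards [isOpen_Iv.mem_nhds hx] with y hy
    exact (h0 y hy).tsum_eq
  have h3 := key.unique h2
  rw [← h3]; exact hsum.hasSum

theorem Pp_deriv {x : ℝ} (hx : x ∈ Iv) (n : ℕ) :
    HasDerivAt (fun y => Pp y n) (Pp x n ^ 2) x := by
  have h := Pp_den hx n
  have h1 : HasDerivAt (fun y : ℝ => (n : ℝ) + 1 - y) (-1) x := by
    simpa using (hasDerivAt_id x).const_sub ((n : ℝ) + 1)
  have := h1.fun_inv h.ne'
  unfold Pp
  simp only [one_div]
  have e : - -1 / ((n : ℝ) + 1 - x) ^ 2 = ((n : ℝ) + 1 - x)⁻¹ ^ 2 := by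
    rw [neg_neg, inv_pow, one_div]
  rw [← e]; exact this

theorem Dd_deriv {x : ℝ} (hx : x ∈ Iv) (n : ℕ) :
    HasDerivAt (fun y => Dd y n) (Pp x n ^ 2) x := by
  unfold Dd; exact (Pp_deriv hx n).sub_const _

theorem pre_deriv {f f' : ℝ → ℕ → ℝ} {x : ℝ}
    (hd : ∀ n, HasDerivAt (fun y => f y n) (f' x n) x) (n : ℕ) :
    HasDerivAt (fun y => pre (f y) n) (pre (f' x) n) x := by
  unfold pre; exact HasDerivAt.fun_sum (fun k _ => hd k)

end

section

open Finset

/-! Duality kernel -/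

noncomputable def Fk (x : ℝ) (n : ℕ) : ℝ := ∏ i ∈ range n, ((i : ℝ) + 1 - x)
noncomputable def Bk (x : ℝ) (l n : ℕ) : ℝ := Fk x l * Fk x n / Fk x (l + n)

theorem Fk_pos {x : ℝ} (hx : x ∈ Iv) (n : ℕ) : 0 < Fk x n :=
  prod_pos fun i _ => Pp_den hx i
theorem Fk_succ (x : ℝ) (n : ℕ) : Fk x (n + 1) = Fk x n * ((n : ℝ) + 1 - x) := by
  unfold Fk; rw [prod_range_succ]
theorem Fk_zero (x : ℝ) : Fk x 0 = 1 := by simp [Fk]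

theorem Bk_pos {x : ℝ} (hx : x ∈ Iv) (l n : ℕ) : 0 < Bk x l n :=
  div_pos (mul_pos (Fk_pos hx l) (Fk_pos hx n)) (Fk_pos hx _)
theorem Bk_comm (x : ℝ) (l n : ℕ) : Bk x l n = Bk x n l := by
  unfold Bk; rw [add_comm l n, mul_comm]
theorem Bk_zero {x : ℝ} (hx : x ∈ Iv) (n : ℕ) : Bk x 0 n = 1 := by
  have := (Fk_pos hx n).ne'
  unfold Bk; rw [Fk_zero, zero_add, one_mul, div_self this]

theorem Bk_step {x : ℝ} (hx : x ∈ Iv) (j n : ℕ) :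
    Bk x j n - Bk x (j + 1) n = n * (Pp x j * Bk x (j + 1) n) := by
  have h1 := (Fk_pos hx j).ne'
  have h2 := (Fk_pos hx n).ne'
  have h3 := (Fk_pos hx (j + n)).ne'
  have h4 := (Pp_den hx j).ne'
  have h5 := (Pp_den hx (j + n)).ne'
  unfold Bk Pp
  rw [show j + 1 + n = (j + n) + 1 by ring, Fk_succ, Fk_succ]
  push_cast at h5 ⊢
  field_simp
  ring

theorem Bk_tendsto {x : ℝ} (hx : x ∈ Iv) (m : ℕ) :
    Filter.Tendsto (fun k => Bk x k (m + 1)) Filter.atTop (nhds 0) := by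
  have hb : ∀ k, Bk x k (m + 1) ≤ Bk x k 1 := by
    intro k
    induction m with
    | zero => exact le_rfl
    | succ m ih =>
      refine le_trans ?_ ih
      have := Bk_step hx (m + 1) k
      rw [Bk_comm x k, Bk_comm x k]
      have h2 : 0 ≤ (k : ℝ) * (Pp x (m + 1) * Bk x (m + 1 + 1) k) :=
        mul_nonneg k.cast_nonneg (mul_nonneg (Pp_pos hx _).le (Bk_pos hx _ _).le)
      linarith
  have h1 : ∀ k : ℕ, Bk x k 1 ≤ 5 * (1 / ((k : ℝ) + 1)) := by
    intro k
    have e : Bk x k 1 = (1 - x) * Pp x k := by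
      have h1 := (Fk_pos hx k).ne'
      have h4 := (Pp_den hx k).ne'
      unfold Bk Pp
      rw [Fk_succ, show (1 : ℕ) = 0 + 1 from rfl, Fk_succ, Fk_zero]
      push_cast
      field_simp
      ring
    rw [e]
    have h2 : Pp x k ≤ 5 * Qq k := by
      rw [Pp_eq]; exact Pc_le (by norm_num) (by norm_num) hx k
    have h3 := Pp_pos hx k
    have h4 := hx.1
    unfold Qq at h2
    nlinarith
  have h2 : Filter.Tendsto (fun k : ℕ => 5 * (1 / ((k : ℝ) + 1))) Filter.atTop (nhds 0) := by
    simpa using (tendsto_one_div_add_atTop_nhds_zero_nat (𝕜 := ℝ)).const_mul 5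
  exact squeeze_zero (fun k => (Bk_pos hx _ _).le) (fun k => (hb k).trans (h1 k)) h2

theorem Qq_mul (m : ℕ) : Qq m * ((m : ℝ) + 1) = 1 := by
  have : (m : ℝ) + 1 ≠ 0 := by positivity
  unfold Qq; field_simp

/-- the basic telescoping sum -/
theorem Bk_tel {x : ℝ} (hx : x ∈ Iv) (l m : ℕ) :
    HasSum (fun j => Pp x (j + l) * Bk x (j + l + 1) (m + 1)) (Qq m * Bk x l (m + 1)) := by
  rw [hasSum_iff_tendsto_nat_of_nonneg
    (fun j => mul_nonneg (Pp_pos hx _).le (Bk_pos hx _ _).le)]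
  have h : ∀ N, ∑ j ∈ range N, Pp x (j + l) * Bk x (j + l + 1) (m + 1)
      = Qq m * (Bk x l (m + 1) - Bk x (N + l) (m + 1)) := by
    intro N
    induction N with
    | zero => simp
    | succ N ih =>
      rw [sum_range_succ, ih]
      have := Bk_step hx (N + l) (m + 1)
      have hq := Qq_mul m
      rw [show N + 1 + l = N + l + 1 by ring]
      push_cast at this
      linear_combination (-Qq m) * this - (Pp x (N + l) * Bk x (N + l + 1) (m + 1)) * hq
  simp only [h]
  have h2 := (Filter.tendsto_add_atTop_iff_nat l).mpr (Bk_tendsto hx m)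
  simpa using (h2.const_sub (Bk x l (m + 1))).const_mul (Qq m)

theorem tail_iff {g : ℕ → ℝ} {t : ℝ} (j : ℕ) :
    HasSum (fun k => if j < k then g k else 0) t ↔ HasSum (fun k => g (k + (j + 1))) t := by
  have h := hasSum_nat_add_iff (f := fun k => if j < k then g k else 0) (j + 1) (g := t)
  have h0 : ∑ i ∈ range (j + 1), (if j < i then g i else 0) = 0 := by
    apply sum_eq_zero; intro i hi; simp at hi; simp; omega
  rw [h0, add_zero] at h
  rw [← h]
  have : (fun k => if j < k + (j + 1) then g (k + (j + 1)) else 0) = fun k => g (k + (j + 1)) := by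
    funext k; rw [if_pos (by omega)]
  rw [this]

theorem Dd_Bk_step {x : ℝ} (hx : x ∈ Iv) (l n : ℕ) {V : ℝ}
    (h : HasSum (fun m => Dd x (m + n) * Bk x l (m + n + 1)) V) :
    HasSum (fun m => Dd x (m + n) * Bk x (l + 1) (m + n + 1)) (V - Dd x l * Bk x (l + 1) n) := by
  have h1 := (Bk_tel hx n l).mul_left (x * Pp x l)
  have h2 := h.sub h1
  rw [Dd_eq hx l]
  refine h2.cg (fun m => ?_) ?_
  · have e := Bk_step hx l (m + n + 1)
    have hq := Qq_mul (m + n)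
    rw [Bk_comm x (m + n + 1) (l + 1)]
    rw [Dd_eq hx (m + n)]
    push_cast at e hq
    linear_combination (-(x * Pp x (m + n) * Qq (m + n))) * e -
      (x * Pp x (m + n) * Pp x l * Bk x (l + 1) (m + n + 1)) * hq
  · rw [Bk_comm x n]; ring

theorem Dd_summable {x : ℝ} (hx : x ∈ Iv) : Summable (Dd x) :=
  Dd_bd.summable le_rfl (by norm_num) hx

theorem Dd_T {x : ℝ} (hx : x ∈ Iv) (l : ℕ) :
    HasSum (fun m => Dd x m * Bk x l (m + 1)) (∑' n, Dd x n - pre (Dd x) l) := by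
  induction l with
  | zero =>
    simp only [Bk_zero hx, mul_one, pre_zero, sub_zero]
    exact (Dd_summable hx).hasSum
  | succ l ih =>
    have := Dd_Bk_step hx l 0 (by simpa using ih)
    simp only [add_zero, Bk_comm x (l + 1) 0, Bk_zero hx, mul_one] at this
    rw [pre_succ]
    exact this.cg (fun k => by ring_nf) (by ring)

/-- the two-sided tail identity -/
theorem Dd_UV {x : ℝ} (hx : x ∈ Iv) (l n : ℕ) : ∃ U : ℝ,
    HasSum (fun k => Dd x (k + l) * Bk x (k + l + 1) n) U ∧
    HasSum (fun m => Dd x (m + n) * Bk x l (m + n + 1)) U := by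
  induction l with
  | zero =>
    refine ⟨∑' n, Dd x n - pre (Dd x) n, ?_, ?_⟩
    · simpa [Bk_comm] using Dd_T hx n
    · simp only [Bk_zero hx, mul_one]
      have := (hasSum_nat_add_iff' n).mpr (Dd_summable hx).hasSum
      simpa [pre] using this
  | succ l ih =>
    obtain ⟨U, h1, h2⟩ := ih
    refine ⟨_, ?_, Dd_Bk_step hx l n h2⟩
    have := (hasSum_nat_add_iff' 1).mpr h1
    simp only [range_one, sum_singleton, zero_add] at this
    refine this.cg (fun k => ?_) rfl
    rw [show k + (l + 1) = k + 1 + l by ring]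

/-- (i) -/
theorem dual_top {x : ℝ} (hx : x ∈ Iv) {v β : ℕ → ℝ} {s : ℝ} (hv : ∀ n, 0 ≤ v n)
    (hβ : ∀ m, HasSum (fun k => v k * Bk x (k + 1) (m + 1)) (β m))
    (h : HasSum (fun n => Dd x n * pre v n) s) : HasSum (fun m => Dd x m * β m) s := by
  have h1 : HasSum (fun k => v k * (∑' n, Dd x n - pre (Dd x) (k + 1))) s := by
    refine swap_hasSum (f := fun n k => if k < n then Dd x n * v k else 0) ?_ ?_ h ?_
    · intro n k; split_ifs
      · exact mul_nonneg (Dd_pos hx n).le (hv k)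
      · exact le_rfl
    · intro n
      have := (pre_hasSum_indicator v n).mul_left (Dd x n)
      simpa only [mul_ite, mul_zero] using this
    · intro k
      rw [tail_iff]
      have := (hasSum_nat_add_iff' (k + 1)).mpr (Dd_summable hx).hasSum
      have := this.mul_left (v k)
      simp only [mul_comm (Dd x _)]
      exact this
  refine swap_hasSum (f := fun k m => v k * (Dd x m * Bk x (k + 1) (m + 1))) ?_ ?_ h1 ?_
  · intro k m; exact mul_nonneg (hv k) (mul_nonneg (Dd_pos hx m).le (Bk_pos hx _ _).le)
  · intro k; exact (Dd_T hx (k + 1)).mul_left (v k)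
  · intro m
    exact ((hβ m).mul_left (Dd x m)).cg (fun k => by ring) rfl

/-- (ii) base -/
theorem dual_p {x : ℝ} (hx : x ∈ Iv) (m : ℕ) :
    HasSum (fun k => Pp x k * Bk x (k + 1) (m + 1)) (Qq m) := by
  simpa [Bk_zero hx] using Bk_tel hx 0 m

/-- (ii) step -/
theorem dual_p_step {x : ℝ} (hx : x ∈ Iv) {v : ℕ → ℝ} {β : ℝ} (m : ℕ) (hv : ∀ n, 0 ≤ v n)
    (hβ : HasSum (fun k => v k * Bk x (k + 1) (m + 1)) β) :
    HasSum (fun k => (Pp x k * pre v k) * Bk x (k + 1) (m + 1)) (Qq m * β) := by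
  refine swap_hasSum (f := fun j k => if j < k then v j * (Pp x k * Bk x (k + 1) (m + 1)) else 0)
    ?_ ?_ (hβ.mul_left (Qq m)) ?_
  · intro j k; split_ifs
    · exact mul_nonneg (hv j) (mul_nonneg (Pp_pos hx k).le (Bk_pos hx _ _).le)
    · exact le_rfl
  · intro j
    rw [tail_iff]
    exact ((Bk_tel hx (j + 1) m).mul_left (v j)).cg (fun k => by ring) (by ring)
  · intro k
    have := (pre_hasSum_indicator v k).mul_right (Pp x k * Bk x (k + 1) (m + 1))
    simp only [ite_mul, zero_mul] at this
    exact this.cg (fun k => by ring_nf) (by ring)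

/-- (iii) -/
theorem dual_d_step {x : ℝ} (hx : x ∈ Iv) {v β : ℕ → ℝ} {s : ℝ} (n : ℕ) (hv : ∀ n, 0 ≤ v n)
    (hβ : ∀ m, HasSum (fun k => v k * Bk x (k + 1) (m + 1)) (β m))
    (h : HasSum (fun m => Dd x (m + (n + 1)) * β (m + (n + 1))) s) :
    HasSum (fun k => (Dd x k * pre v k) * Bk x (k + 1) (n + 1)) s := by
  choose U hU1 hU2 using fun j => Dd_UV hx (j + 1) (n + 1)
  have h1 : HasSum (fun j => v j * U j) s := by
    refine swap_hasSum (f := fun m j => Dd x (m + (n + 1)) *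
      (v j * Bk x (j + 1) (m + (n + 1) + 1))) ?_ ?_ h ?_
    · intro m j; exact mul_nonneg (Dd_pos hx _).le (mul_nonneg (hv j) (Bk_pos hx _ _).le)
    · intro m; exact (hβ _).mul_left _
    · intro j
      exact ((hU2 j).mul_left (v j)).cg (fun k => by ring) rfl
  refine swap_hasSum (f := fun j k => if j < k then v j * (Dd x k * Bk x (k + 1) (n + 1)) else 0)
    ?_ ?_ h1 ?_
  · intro j k; split_ifs
    · exact mul_nonneg (hv j) (mul_nonneg (Dd_pos hx k).le (Bk_pos hx _ _).le)
    · exact le_rfl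
  · intro j
    rw [tail_iff]
    exact (hU1 j).mul_left (v j)
  · intro k
    have := (pre_hasSum_indicator v k).mul_right (Dd x k * Bk x (k + 1) (n + 1))
    simp only [ite_mul, zero_mul] at this
    exact this.cg (fun k => by ring_nf) (by ring)

end

section

open Finset

theorem dual_zero {x : ℝ} (hx : x ∈ Iv) {v β : ℕ → ℝ} (hv : ∀ n, 0 ≤ v n)
    (hβ : ∀ m, HasSum (fun k => v k * Bk x (k + 1) (m + 1)) (β m))
    (h : Summable (fun n => Dd x n * pre v n)) :
    HasSum (fun n => Dd x n * pre v n - Dd x n * β n) 0 := by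
  have h1 := dual_top hx hv hβ h.hasSum
  simpa using h.hasSum.sub h1

theorem Z2 : ∀ x ∈ Iv, HasSum (fun n => Dd x n * pre (Pp x) n - Dd x n * Qq n) 0 := fun x hx =>
  dual_zero hx (fun n => (Pp_pos hx n).le) (fun m => dual_p hx m)
    ((Dd_bd.mul Pp_bd.pre).summable (by norm_num) (by norm_num) hx)

theorem ppre_nonneg {x : ℝ} (hx : x ∈ Iv) {v : ℕ → ℝ} (hv : ∀ n, 0 ≤ v n) (n : ℕ) :
    0 ≤ Pp x n * pre v n := mul_nonneg (Pp_pos hx n).le (pre_nonneg hv n)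

theorem PP_bd : Bd 1 1 (fun x n => Pp x n * pre (Pp x) n) := Pp_bd.mul Pp_bd.pre
theorem PPP_bd : Bd 1 2 (fun x n => Pp x n * pre (fun k => Pp x k * pre (Pp x) k) n) :=
  Pp_bd.mul PP_bd.pre

theorem Z3 : ∀ x ∈ Iv, HasSum (fun n => Dd x n * pre (fun k => Pp x k * pre (Pp x) k) n
    - Dd x n * (Qq n * Qq n)) 0 := fun x hx =>
  dual_zero hx (ppre_nonneg hx (fun n => (Pp_pos hx n).le))
    (fun m => dual_p_step hx m (fun n => (Pp_pos hx n).le) (dual_p hx m))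
    ((Dd_bd.mul PP_bd.pre).summable (by norm_num) (by norm_num) hx)

theorem Z4 : ∀ x ∈ Iv, HasSum (fun n => Dd x n *
    pre (fun k => Pp x k * pre (fun k => Pp x k * pre (Pp x) k) k) n
    - Dd x n * (Qq n * (Qq n * Qq n))) 0 := fun x hx =>
  dual_zero hx (ppre_nonneg hx (ppre_nonneg hx (fun n => (Pp_pos hx n).le)))
    (fun m => dual_p_step hx m (ppre_nonneg hx (fun n => (Pp_pos hx n).le))
      (dual_p_step hx m (fun n => (Pp_pos hx n).le) (dual_p hx m)))
    ((Dd_bd.mul PPP_bd.pre).summable (by norm_num) (by norm_num) hx)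

/-- swap a tail sum to a head sum -/
theorem tail_swap {f : ℕ → ℝ} {t : ℕ → ℝ} {s : ℝ} (hf : ∀ n, 0 ≤ f n)
    (ht : ∀ n, HasSum (fun m => f (m + (n + 1))) (t n))
    (h : HasSum (fun n => f n * t n) s) : HasSum (fun m => f m * pre f m) s := by
  refine swap_hasSum (f := fun n m => if n < m then f n * f m else 0) ?_ ?_ h ?_
  · intro n m; split_ifs
    · exact mul_nonneg (hf n) (hf m)
    · exact le_rfl
  · intro n
    rw [tail_iff]
    exact (ht n).mul_left (f n)
  · intro m
    have := (pre_hasSum_indicator f m).mul_right (f m)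
    simp only [ite_mul, zero_mul] at this
    exact this.cg (fun k => rfl) (by ring)

theorem Z22 : ∀ x ∈ Iv, HasSum (fun n => Dd x n *
    pre (fun k => Pp x k * pre (fun k => Dd x k * pre (Pp x) k) k) n
    - (Dd x n * Qq n) * pre (fun k => Dd x k * Qq k) n) 0 := by
  intro x hx
  have hs : Summable (fun n => Dd x n * Qq n) :=
    (Dd_bd.mul Qq_bd).summable (by norm_num) (by norm_num) hx
  have hp : ∀ n, 0 ≤ Pp x n := fun n => (Pp_pos hx n).le
  have ht : ∀ n, HasSum (fun m => Dd x (m + (n + 1)) * Qq (m + (n + 1)))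
      (∑' n, Dd x n * Qq n - ∑ i ∈ range (n + 1), Dd x i * Qq i) :=
    fun n => (hasSum_nat_add_iff' (n + 1)).mpr hs.hasSum
  have h2 := fun m => dual_d_step hx m hp (fun m => dual_p hx m) (ht m)
  have hd : ∀ n, 0 ≤ Dd x n * pre (Pp x) n :=
    fun n => mul_nonneg (Dd_pos hx n).le (pre_nonneg hp n)
  have h3 := fun m => dual_p_step hx m hd (h2 m)
  have hsum : Summable (fun n => Dd x n *
      pre (fun k => Pp x k * pre (fun k => Dd x k * pre (Pp x) k) k) n) :=
    (Dd_bd.mul (Pp_bd.mul ((Dd_bd.mul Pp_bd.pre).mono (i' := 1) (j' := 1)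
      (by norm_num) (by norm_num)).pre).pre).summable (by norm_num) (by norm_num) hx
  have h4 := dual_top hx (ppre_nonneg hx hd) h3 hsum.hasSum
  have h5 := tail_swap (f := fun n => Dd x n * Qq n)
    (fun n => mul_nonneg (Dd_pos hx n).le (Qq_pos n).le) ht
    (h4.cg (fun n => by ring) rfl)
  simpa using hsum.hasSum.sub h5

/-! derivatives -/

theorem P2_bd : Bd 2 0 (fun x n => Pp x n ^ 2) := (Pp_bd.mul Pp_bd).congr (fun x _ n => by ring)
theorem P3_bd : Bd 3 0 (fun x n => Pp x n ^ 3) := (Pp_bd.mul P2_bd).congr (fun x _ n => by ring)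

theorem Pp2_deriv {x : ℝ} (hx : x ∈ Iv) (n : ℕ) :
    HasDerivAt (fun y => Pp y n ^ 2) (2 * Pp x n ^ 3) x := by
  have := (Pp_deriv hx n).fun_pow 2
  have e : 2 * Pp x n ^ 3 = ((2 : ℕ) : ℝ) * Pp x n ^ (2 - 1) * Pp x n ^ 2 := by norm_num; ring
  rw [e]; exact this

theorem prePp_deriv {x : ℝ} (hx : x ∈ Iv) (n : ℕ) :
    HasDerivAt (fun y => pre (Pp y) n) (pre (fun k => Pp x k ^ 2) n) x :=
  pre_deriv (f := Pp) (f' := fun x k => Pp x k ^ 2) (fun k => Pp_deriv hx k) n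

theorem prePp2_deriv {x : ℝ} (hx : x ∈ Iv) (n : ℕ) :
    HasDerivAt (fun y => pre (fun k => Pp y k ^ 2) n) (pre (fun k => 2 * Pp x k ^ 3) n) x :=
  pre_deriv (f := fun x k => Pp x k ^ 2) (f' := fun x k => 2 * Pp x k ^ 3)
    (fun k => Pp2_deriv hx k) n

theorem Z2_d : ∀ x ∈ Iv, HasSum (fun n => Pp x n ^ 2 * pre (Pp x) n +
    Dd x n * pre (fun k => Pp x k ^ 2) n - Pp x n ^ 2 * Qq n) 0 := by
  refine derivSer_zero (i := 2) (j := 1) ?_ (by norm_num) (by norm_num) ?_ Z2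
  · refine ((P2_bd.mul Pp_bd.pre).add
      (Dd_bd.mul (P2_bd.mono (i' := 1) (j' := 0) (by norm_num) le_rfl).pre)).sub ?_
    exact (P2_bd.mul Qq_bd).mono (by norm_num) (by norm_num)
  · intro x hx n
    exact ((Dd_deriv hx n).fun_mul (prePp_deriv hx n)).fun_sub
      ((Dd_deriv hx n).mul_const _)

theorem Z2_dd : ∀ x ∈ Iv, HasSum (fun n => (2 * Pp x n ^ 3 * pre (Pp x) n +
    Pp x n ^ 2 * pre (fun k => Pp x k ^ 2) n) + (Pp x n ^ 2 * pre (fun k => Pp x k ^ 2) n +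
    Dd x n * pre (fun k => 2 * Pp x k ^ 3) n) - 2 * Pp x n ^ 3 * Qq n) 0 := by
  have b1 : Bd 0 1 (fun x n => pre (fun k => Pp x k ^ 2) n) :=
    (P2_bd.mono (i' := 1) (j' := 0) (by norm_num) le_rfl).pre
  have b2 : Bd 0 1 (fun x n => pre (fun k => 2 * Pp x k ^ 3) n) :=
    ((P3_bd.cmul 2).mono (i' := 1) (j' := 0) (by norm_num) le_rfl).pre
  have b3 : Bd 3 0 (fun x n => 2 * Pp x n ^ 3) := P3_bd.cmul 2
  refine derivSer_zero (i := 2) (j := 1) ?_ (by norm_num) (by norm_num) ?_ Z2_d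
  · refine ((((b3.mul Pp_bd.pre).mono (by norm_num) (by norm_num)).add
      (P2_bd.mul b1)).add ((P2_bd.mul b1).add (Dd_bd.mul b2))).sub ?_
    exact (b3.mul Qq_bd).mono (by norm_num) (by norm_num)
  · intro x hx n
    exact (((Pp2_deriv hx n).fun_mul (prePp_deriv hx n)).fun_add
      ((Dd_deriv hx n).fun_mul (prePp2_deriv hx n))).fun_sub
      ((Pp2_deriv hx n).mul_const _)

theorem Z3_d : ∀ x ∈ Iv, HasSum (fun n => Pp x n ^ 2 * pre (fun k => Pp x k * pre (Pp x) k) n +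
    Dd x n * pre (fun k => Pp x k ^ 2 * pre (Pp x) k + Pp x k * pre (fun l => Pp x l ^ 2) k) n
    - Pp x n ^ 2 * (Qq n * Qq n)) 0 := by
  have b1 : Bd 0 1 (fun x n => pre (fun k => Pp x k ^ 2) n) :=
    (P2_bd.mono (i' := 1) (j' := 0) (by norm_num) le_rfl).pre
  refine derivSer_zero (i := 2) (j := 2) ?_ (by norm_num) (by norm_num) ?_ Z3
  · refine ((P2_bd.mul PP_bd.pre).add (Dd_bd.mul (Bd.pre (j := 1) ?_))).sub ?_
    · exact ((P2_bd.mul Pp_bd.pre).mono (by norm_num) (by norm_num)).add (Pp_bd.mul b1)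
    · exact (P2_bd.mul (Qq_bd.mul Qq_bd)).mono (by norm_num) (by norm_num)
  · intro x hx n
    refine ((Dd_deriv hx n).fun_mul (pre_deriv (f := fun y k => Pp y k * pre (Pp y) k)
        (f' := fun y k => Pp y k ^ 2 * pre (Pp y) k + Pp y k * pre (fun l => Pp y l ^ 2) k)
          (fun k => ?_) n)).fun_sub ((Dd_deriv hx n).mul_const _)
    exact (Pp_deriv hx k).fun_mul (prePp_deriv hx k)

theorem Zpq : ∀ x ∈ Iv, HasSum (fun n => Pp x n * Qq n * pre (Pp x) n
    - Pp x n * Qq n * Qq n) 0 := by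
  intro x hx
  have hx0 : x ≠ 0 := hx.1.ne'
  refine ((Z2 x hx).mul_left x⁻¹).cg (fun n => ?_) (by simp)
  rw [Dd_eq hx]; field_simp

theorem Zpqpp : ∀ x ∈ Iv, HasSum (fun n => Pp x n * Qq n * pre (fun k => Pp x k * pre (Pp x) k) n
    - Pp x n * Qq n * (Qq n * Qq n)) 0 := by
  intro x hx
  have hx0 : x ≠ 0 := hx.1.ne'
  refine ((Z3 x hx).mul_left x⁻¹).cg (fun n => ?_) (by simp)
  rw [Dd_eq hx]; field_simp

theorem Zpq_d : ∀ x ∈ Iv, HasSum (fun n => Pp x n ^ 2 * Qq n * pre (Pp x) n +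
    Pp x n * Qq n * pre (fun k => Pp x k ^ 2) n
    - Pp x n ^ 2 * Qq n * Qq n) 0 := by
  have b1 : Bd 0 1 (fun x n => pre (fun k => Pp x k ^ 2) n) :=
    (P2_bd.mono (i' := 1) (j' := 0) (by norm_num) le_rfl).pre
  refine derivSer_zero (i := 2) (j := 1) ?_ (by norm_num) (by norm_num) ?_ Zpq
  · refine ((((P2_bd.mul Qq_bd).mul Pp_bd.pre).mono (by norm_num) (by norm_num)).add
      ((Pp_bd.mul Qq_bd).mul b1)).sub ?_
    exact ((P2_bd.mul Qq_bd).mul Qq_bd).mono (by norm_num) (by norm_num)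
  · intro x hx n
    exact (((Pp_deriv hx n).mul_const (Qq n)).fun_mul (prePp_deriv hx n)).fun_sub
      (((Pp_deriv hx n).mul_const (Qq n)).mul_const _)

end

section

open Finset

noncomputable def Pb (x : ℝ) (n : ℕ) : ℝ := 1 / ((n : ℝ) + 1 + x)
noncomputable def aa (x : ℝ) : ℝ := ∑' n, Dd x n
noncomputable def hh (x : ℝ) (n : ℕ) : ℝ := aa x + pre Qq (n + 1)
noncomputable def ee (x : ℝ) (n : ℕ) : ℝ := pre (fun k => Qq k * pre (Pp x) k) n
noncomputable def yy (x : ℝ) (n : ℕ) : ℝ := x * Qq n * Pb x n * hh x n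

theorem Qq_anti (n r : ℕ) : Qq (n + r) ≤ Qq n := by
  unfold Qq; push_cast
  have : (0 : ℝ) ≤ r := r.cast_nonneg
  apply one_div_le_one_div_of_le <;> [positivity; linarith]

theorem Qq_tendsto : Filter.Tendsto Qq Filter.atTop (nhds 0) :=
  tendsto_one_div_add_atTop_nhds_zero_nat (𝕜 := ℝ)

theorem Qq_tel1 (r : ℕ) : HasSum (fun m => Qq (m + r) - Qq (m + r + 1)) (Qq r) := by
  rw [hasSum_iff_tendsto_nat_of_nonneg (fun m => sub_nonneg.mpr (Qq_anti _ 1))]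
  have h : ∀ N, ∑ m ∈ range N, (Qq (m + r) - Qq (m + r + 1)) = Qq r - Qq (N + r) := by
    intro N
    induction N with
    | zero => simp
    | succ N ih => rw [sum_range_succ, ih, show N + 1 + r = N + r + 1 by ring]; ring
  simp only [h]
  have := (Filter.tendsto_add_atTop_iff_nat r).mpr Qq_tendsto
  simpa using this.const_sub (Qq r)

theorem Qq_tel (r : ℕ) : HasSum (fun m => Qq m - Qq (m + r)) (pre Qq r) := by
  induction r with
  | zero => simp
  | succ r ih =>
    refine (ih.add (Qq_tel1 r)).cg (fun n => ?_) (pre_succ _ _)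
    rw [show n + (r + 1) = n + r + 1 by ring]; ring

theorem pre_tel1 {f : ℕ → ℝ} {s : ℝ} (hf : ∀ n, 0 ≤ f n) (r : ℕ)
    (h : HasSum (fun k => f k * Qq (k + r + 1)) s) :
    HasSum (fun n => pre f n * (Qq (n + r) - Qq (n + r + 1))) s := by
  refine swap_hasSum (f := fun k n => if k < n then f k * (Qq (n + r) - Qq (n + r + 1)) else 0)
    ?_ ?_ h ?_
  · intro k n; split_ifs
    · exact mul_nonneg (hf k) (sub_nonneg.mpr (Qq_anti _ 1))
    · exact le_rfl
  · intro k
    rw [tail_iff]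
    refine ((Qq_tel1 (k + r + 1)).mul_left (f k)).cg (fun n => ?_) rfl
    rw [show n + (k + 1) + r = n + (k + r + 1) by ring]
  · intro n
    have := (pre_hasSum_indicator f n).mul_right (Qq (n + r) - Qq (n + r + 1))
    simpa only [ite_mul, zero_mul] using this

theorem pre_tel {f t : ℕ → ℝ} (hf : ∀ n, 0 ≤ f n)
    (h : ∀ r, HasSum (fun k => f k * Qq (k + r + 1)) (t r)) (m : ℕ) :
    HasSum (fun n => pre f n * (Qq n - Qq (n + m))) (pre t m) := by
  induction m with
  | zero => simp
  | succ m ih =>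
    refine (ih.add (pre_tel1 hf m (h m))).cg (fun n => ?_) (pre_succ _ _)
    rw [show n + (m + 1) = n + m + 1 by ring]; ring

section
variable {x : ℝ}

theorem Pb_den (hx : x ∈ Iv) (n : ℕ) : (0 : ℝ) < (n : ℝ) + 1 + x := by
  have := hx.1; positivity

theorem aa_hasSum (hx : x ∈ Iv) : HasSum (Dd x) (aa x) := (Dd_summable hx).hasSum
theorem aa_nonneg (hx : x ∈ Iv) : 0 ≤ aa x := tsum_nonneg fun n => (Dd_pos hx n).le
theorem preQ_nonneg (n : ℕ) : 0 ≤ pre Qq n := pre_nonneg (fun n => (Qq_pos n).le) n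
theorem hh_nonneg (hx : x ∈ Iv) (n : ℕ) : 0 ≤ hh x n :=
  add_nonneg (aa_nonneg hx) (preQ_nonneg _)
theorem Pb_nonneg (hx : x ∈ Iv) (n : ℕ) : 0 ≤ Pb x n := by
  have := Pb_den hx n; unfold Pb; positivity
theorem yy_nonneg (hx : x ∈ Iv) (n : ℕ) : 0 ≤ yy x n :=
  mul_nonneg (mul_nonneg (mul_nonneg hx.1.le (Qq_pos n).le) (Pb_nonneg hx n)) (hh_nonneg hx n)
theorem ee_nonneg (hx : x ∈ Iv) (n : ℕ) : 0 ≤ ee x n :=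
  pre_nonneg (fun k => mul_nonneg (Qq_pos k).le (pre_nonneg (fun n => (Pp_pos hx n).le) k)) n

/-- K1 -/
theorem ker_one (hx : x ∈ Iv) (n : ℕ) :
    HasSum (fun m => Pp x m * Qq (m + n + 1)) (Pb x n * hh x n) := by
  have h1 := ((aa_hasSum hx).add (Qq_tel (n + 1))).mul_left (Pb x n)
  refine h1.cg (fun m => ?_) rfl
  have a1 := (Pp_den hx m).ne'
  have a2 := (Pb_den hx n).ne'
  have a3 : (m : ℝ) + n + 2 ≠ 0 := by positivity
  unfold Dd Pp Pb Qq
  push_cast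
  rw [show (m : ℝ) + (n + 1) + 1 = m + n + 2 by ring, show (m : ℝ) + n + 1 + 1 = m + n + 2 by ring]
  field_simp
  ring

theorem yy_hasSum (hx : x ∈ Iv) (n : ℕ) :
    HasSum (fun m => Dd x m * (Qq n - Qq (m + n + 1))) (yy x n) := by
  refine ((ker_one hx n).mul_left (x * Qq n)).cg (fun m => ?_) (by unfold yy; ring)
  rw [Dd_eq hx]
  have a3 : (m : ℝ) + n + 1 + 1 ≠ 0 := by positivity
  have a4 : (m : ℝ) + 1 ≠ 0 := by positivity
  have a5 : (n : ℝ) + 1 ≠ 0 := by positivity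
  unfold Qq
  push_cast
  field_simp
  ring

theorem two_pp (hx : x ∈ Iv) (n : ℕ) : 2 * x * Pp x n * Pb x n = Dd x n + x * Qq n * Pb x n := by
  have a1 := (Pp_den hx n).ne'
  have a2 := (Pb_den hx n).ne'
  have a5 : (n : ℝ) + 1 ≠ 0 := by positivity
  unfold Dd Pp Pb Qq
  field_simp
  ring

theorem Pb_hh (hx : x ∈ Iv) (n : ℕ) : Pb x n * hh x n = Qq n * hh x n - yy x n := by
  have a2 := (Pb_den hx n).ne'
  have a5 : (n : ℝ) + 1 ≠ 0 := by positivity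
  unfold yy Pb Qq
  field_simp
  ring

theorem Bd.pre1 {j : ℕ} {f : ℝ → ℕ → ℝ} (hf : Bd 1 j f) :
    Bd 0 (j + 1) (fun x n => _root_.pre (f x) (n + 1)) :=
  (hf.pre.add (hf.mono (Nat.zero_le _) (Nat.le_succ _))).congr (fun x _ n => by rw [pre_succ])

noncomputable def D1 (x : ℝ) : ℝ := ∑' n, Dd x n * pre Qq (n + 1)
theorem D1_hasSum (hx : x ∈ Iv) : HasSum (fun n => Dd x n * pre Qq (n + 1)) (D1 x) :=
  ((Dd_bd.mul Qq_bd.pre1).summable (by norm_num) (by norm_num) hx).hasSum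

theorem yy_sum (hx : x ∈ Iv) : HasSum (yy x) (D1 x) := by
  refine swap_hasSum (f := fun m n => Dd x m * (Qq n - Qq (m + n + 1))) ?_ ?_ (D1_hasSum hx)
    (fun n => yy_hasSum hx n)
  · intro m n
    refine mul_nonneg (Dd_pos hx m).le (sub_nonneg.mpr ?_)
    rw [show m + n + 1 = n + (m + 1) by ring]; exact Qq_anti _ _
  · intro m
    refine ((Qq_tel (m + 1)).mul_left (Dd x m)).cg (fun n => ?_) rfl
    rw [show m + n + 1 = n + (m + 1) by ring]

/-- value of R -/
theorem R_hasSum (hx : x ∈ Iv) :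
    HasSum (fun n => 2 * x * Pp x n * (Pb x n * hh x n)) (aa x ^ 2 + 2 * D1 x) := by
  have h := (((aa_hasSum hx).mul_left (aa x)).add (D1_hasSum hx)).add (yy_sum hx)
  refine h.cg (fun n => ?_) (by ring)
  have := two_pp hx n
  unfold yy
  have e : hh x n = aa x + pre Qq (n + 1) := rfl
  linear_combination hh x n * this + Dd x n * e

noncomputable def kap (M N : ℕ) : ℝ := pre (fun r => Qq r * pre (fun i => Qq i - Qq (i + N)) (r + 1)) M

theorem del_symm (R N : ℕ) : pre (fun i => Qq i - Qq (i + N)) R = pre (fun i => Qq i - Qq (i + R)) N := by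
  have h : ∀ R, pre (fun i => Qq i - Qq (i + N)) R = pre Qq R + pre Qq N - pre Qq (R + N) := by
    intro R
    induction R with
    | zero => simp
    | succ R ih => rw [pre_succ, ih, pre_succ, show R + 1 + N = R + N + 1 by ring, pre_succ]; ring
  have h2 : ∀ N, pre (fun i => Qq i - Qq (i + R)) N = pre Qq R + pre Qq N - pre Qq (R + N) := by
    intro N
    induction N with
    | zero => simp
    | succ N ih =>
      rw [pre_succ, ih, pre_succ, show R + (N + 1) = R + N + 1 by ring, pre_succ, add_comm N R]; ring
  rw [h, h2]

theorem pre_add (f g : ℕ → ℝ) (n : ℕ) : pre (fun k => f k + g k) n = pre f n + pre g n := by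
  unfold pre; exact sum_add_distrib
theorem pre_sub (f g : ℕ → ℝ) (n : ℕ) : pre (fun k => f k - g k) n = pre f n - pre g n := by
  unfold pre; exact sum_sub_distrib _ _
theorem pre_cmul (c : ℝ) (f : ℕ → ℝ) (n : ℕ) : pre (fun k => c * f k) n = c * pre f n := by
  unfold pre; exact (mul_sum _ _ _).symm
theorem pre_congr {f g : ℕ → ℝ} (h : ∀ n, f n = g n) (n : ℕ) : pre f n = pre g n := by
  rw [show f = g from funext h]

theorem del_succ (N R : ℕ) : pre (fun i => Qq i - Qq (i + (N + 1))) R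
    = pre (fun i => Qq i - Qq (i + N)) R + (Qq N - Qq (R + N)) := by
  induction R with
  | zero => simp
  | succ R ih =>
    rw [pre_succ, pre_succ, ih, show R + (N + 1) = R + N + 1 by ring,
      show R + 1 + N = R + N + 1 by ring]; ring

theorem kap_symm (M N : ℕ) : kap M N + kap N M = pre Qq M * pre Qq N := by
  induction N with
  | zero => simp [kap, pre]
  | succ N ih =>
    have h1 : kap M (N + 1) = kap M N + pre (fun r => Qq r * (Qq N - Qq (r + 1 + N))) M := by
      unfold kap; rw [← pre_add]
      apply pre_congr; intro r; rw [del_succ]; ring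
    have h2 : kap (N + 1) M = kap N M + Qq N * pre (fun i => Qq i - Qq (i + (N + 1))) M := by
      unfold kap; rw [pre_succ, del_symm]
    have h3 : pre (fun r => Qq r * (Qq N - Qq (r + 1 + N))) M +
        Qq N * pre (fun i => Qq i - Qq (i + (N + 1))) M = Qq N * pre Qq M := by
      rw [← pre_cmul, ← pre_cmul, ← pre_add]
      apply pre_congr; intro r
      have a3 : (r : ℝ) + N + 2 ≠ 0 := by positivity
      have a4 : (r : ℝ) + 1 ≠ 0 := by positivity
      have a5 : (N : ℝ) + 1 ≠ 0 := by positivity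
      unfold Qq; push_cast
      rw [show (r : ℝ) + 1 + N + 1 = r + N + 2 by ring, show (r : ℝ) + (N + 1) + 1 = r + N + 2 by ring]
      field_simp
      ring
    rw [h1, h2, pre_succ]
    linear_combination ih + h3

theorem kap_nonneg (M N : ℕ) : 0 ≤ kap M N :=
  pre_nonneg (fun r => mul_nonneg (Qq_pos r).le
    (pre_nonneg (fun i => sub_nonneg.mpr (Qq_anti i N)) _)) _

theorem pre_hasSum {f : ℕ → ℕ → ℝ} {g : ℕ → ℝ} (h : ∀ k, HasSum (fun n => f n k) (g k)) (m : ℕ) :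
    HasSum (fun n => pre (f n) m) (pre g m) := by
  unfold pre; exact hasSum_sum (fun k _ => h k)

noncomputable def zz (x : ℝ) (m : ℕ) : ℝ := pre (fun r => Qq r * pre (yy x) (r + 1)) (m + 1)
noncomputable def xx (x : ℝ) (m : ℕ) : ℝ :=
  pre (fun r => Qq r * pre (fun i => Qq i * hh x i) (r + 1)) (m + 1)

theorem zz_hasSum (hx : x ∈ Iv) (m : ℕ) :
    HasSum (fun n => Dd x n * kap (m + 1) (n + 1)) (zz x m) := by
  have h1 : ∀ r, HasSum (fun n => pre (fun i => Dd x n * (Qq i - Qq (n + i + 1))) (r + 1))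
      (pre (yy x) (r + 1)) := fun r => pre_hasSum (fun i => yy_hasSum hx i) (r + 1)
  have h2 := pre_hasSum (fun r => (h1 r).mul_left (Qq r)) (m + 1)
  refine h2.cg (fun n => ?_) rfl
  unfold kap
  rw [← pre_cmul]
  apply pre_congr; intro r
  rw [pre_cmul]
  rw [mul_left_comm]
  congr 2
  apply pre_congr; intro i
  rw [show n + i + 1 = i + (n + 1) by ring]

theorem yy_le (hx : x ∈ Iv) (n : ℕ) : yy x n ≤ Qq n * hh x n := by
  have h1 := Pb_hh hx n
  have h2 := mul_nonneg (Pb_nonneg hx n) (hh_nonneg hx n)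
  linarith

theorem pre_mono {f g : ℕ → ℝ} (h : ∀ n, f n ≤ g n) (n : ℕ) : pre f n ≤ pre g n :=
  sum_le_sum fun k _ => h k

theorem zz_le (hx : x ∈ Iv) (n : ℕ) : zz x n ≤ xx x n :=
  pre_mono (fun r => mul_le_mul_of_nonneg_left (pre_mono (yy_le hx) _) (Qq_pos r).le) _

theorem zz_nonneg (hx : x ∈ Iv) (n : ℕ) : 0 ≤ zz x n :=
  pre_nonneg (fun r => mul_nonneg (Qq_pos r).le (pre_nonneg (yy_nonneg hx) _)) _

noncomputable def t3 (m : ℕ) : ℝ := pre (fun r => Qq r * pre Qq (r + 1)) (m + 1)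
noncomputable def t4 (m : ℕ) : ℝ :=
  pre (fun r => Qq r * pre (fun i => Qq i * pre Qq (i + 1)) (r + 1)) (m + 1)

theorem xx_eq (m : ℕ) : xx x m = aa x * t3 m + t4 m := by
  unfold xx t3 t4
  rw [← pre_cmul, ← pre_add]
  apply pre_congr; intro r
  have : pre (fun i => Qq i * hh x i) (r + 1) = aa x * pre Qq (r + 1) +
      pre (fun i => Qq i * pre Qq (i + 1)) (r + 1) := by
    rw [← pre_cmul, ← pre_add]
    apply pre_congr; intro i; unfold hh; ring
  rw [this]; ring

noncomputable def s1 (x : ℝ) : ℝ := ∑' n, Dd x n * ee x n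
noncomputable def s2 (x : ℝ) : ℝ := ∑' n, Dd x n * ee x n * pre Qq (n + 1)
noncomputable def s3 (x : ℝ) : ℝ := ∑' n, Dd x n * t3 n
noncomputable def s4 (x : ℝ) : ℝ := ∑' n, Dd x n * t4 n

theorem ee_bd : Bd 0 2 ee := (Qq_bd.mul Pp_bd.pre).pre
theorem t3_bd : Bd 0 2 (fun _ => t3) := (Qq_bd.mul Qq_bd.pre1).pre1
theorem t4_bd : Bd 0 3 (fun _ => t4) := (Qq_bd.mul (Qq_bd.mul Qq_bd.pre1).pre1).pre1

theorem s1_hasSum (hx : x ∈ Iv) : HasSum (fun n => Dd x n * ee x n) (s1 x) :=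
  ((Dd_bd.mul ee_bd).summable (by norm_num) (by norm_num) hx).hasSum
theorem s2_hasSum (hx : x ∈ Iv) : HasSum (fun n => Dd x n * ee x n * pre Qq (n + 1)) (s2 x) :=
  (((Dd_bd.mul ee_bd).mul Qq_bd.pre1).summable (by norm_num) (by norm_num) hx).hasSum
theorem s3_hasSum (hx : x ∈ Iv) : HasSum (fun n => Dd x n * t3 n) (s3 x) :=
  ((Dd_bd.mul t3_bd).summable (by norm_num) (by norm_num) hx).hasSum
theorem s4_hasSum (hx : x ∈ Iv) : HasSum (fun n => Dd x n * t4 n) (s4 x) :=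
  ((Dd_bd.mul t4_bd).summable (by norm_num) (by norm_num) hx).hasSum

theorem X_hasSum (hx : x ∈ Iv) : HasSum (fun n => Dd x n * xx x n) (aa x * s3 x + s4 x) :=
  (((s3_hasSum hx).mul_left (aa x)).add (s4_hasSum hx)).cg
    (fun n => by rw [xx_eq]; ring) rfl

theorem Z_hasSum (hx : x ∈ Iv) : HasSum (fun n => Dd x n * zz x n) (D1 x ^ 2 / 2) := by
  have hs : Summable (fun n => Dd x n * zz x n) :=
    Summable.of_nonneg_of_le (fun n => mul_nonneg (Dd_pos hx n).le (zz_nonneg hx n))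
      (fun n => mul_le_mul_of_nonneg_left (zz_le hx n) (Dd_pos hx n).le) (X_hasSum hx).summable
  have h1 := swap_summable (f := fun m n => Dd x m * (Dd x n * kap (m + 1) (n + 1)))
    (fun m n => mul_nonneg (Dd_pos hx m).le (mul_nonneg (Dd_pos hx n).le (kap_nonneg _ _)))
    (fun m => (zz_hasSum hx m).mul_left (Dd x m)) hs.hasSum
  have h2 := (Equiv.prodComm ℕ ℕ).hasSum_iff.mpr h1
  have h3 := h1.add h2
  have h4 := swap_summable
    (f := fun m n => (Dd x m * pre Qq (m + 1)) * (Dd x n * pre Qq (n + 1)))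
    (fun m n => mul_nonneg (mul_nonneg (Dd_pos hx m).le (preQ_nonneg _))
      (mul_nonneg (Dd_pos hx n).le (preQ_nonneg _)))
    (fun m => (D1_hasSum hx).mul_left (Dd x m * pre Qq (m + 1)))
    ((D1_hasSum hx).mul_right (D1 x))
  have h5 := h4.unique (h3.cg (fun z => by
    have := kap_symm (z.1 + 1) (z.2 + 1)
    simp only [Function.comp, Equiv.prodComm_apply, Prod.fst_swap, Prod.snd_swap]
    linear_combination (-(Dd x z.1 * Dd x z.2)) * this) rfl)
  refine hs.hasSum.cg (fun n => rfl) ?_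
  linarith [h5]

theorem phi_hasSum (hx : x ∈ Iv) (m : ℕ) :
    HasSum (fun n => ee x n * (Qq n - Qq (n + (m + 1)))) (xx x m - zz x m) := by
  have hp : ∀ n, 0 ≤ Pp x n := fun n => (Pp_pos hx n).le
  have h1 := fun r => pre_tel hp (fun r => ker_one hx r) (r + 1)
  have h2 : ∀ r, HasSum (fun k => (Qq k * pre (Pp x) k) * Qq (k + r + 1))
      (Qq r * pre (fun r => Pb x r * hh x r) (r + 1)) := by
    intro r
    refine ((h1 r).mul_left (Qq r)).cg (fun k => ?_) rfl
    have a3 : (k : ℝ) + r + 1 + 1 ≠ 0 := by positivity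
    have a4 : (r : ℝ) + 1 ≠ 0 := by positivity
    have a5 : (k : ℝ) + 1 ≠ 0 := by positivity
    have : Qq k * Qq (k + r + 1) = Qq r * (Qq k - Qq (k + (r + 1))) := by
      rw [show k + (r + 1) = k + r + 1 by ring]
      unfold Qq; push_cast
      field_simp
      ring
    linear_combination pre (Pp x) k * this
  have h3 := pre_tel (f := fun k => Qq k * pre (Pp x) k)
    (fun k => mul_nonneg (Qq_pos k).le (pre_nonneg hp k)) h2 (m + 1)
  refine h3.cg (fun n => rfl) ?_
  unfold xx zz
  rw [← pre_sub]
  apply pre_congr; intro r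
  rw [← mul_sub, ← pre_sub]
  congr 1
  apply pre_congr; intro i
  rw [Pb_hh hx]

theorem ey_hasSum (hx : x ∈ Iv) :
    HasSum (fun n => ee x n * yy x n) (aa x * s3 x + s4 x - D1 x ^ 2 / 2) := by
  have h := (X_hasSum hx).sub (Z_hasSum hx)
  refine swap_hasSum (f := fun m n => Dd x m * (ee x n * (Qq n - Qq (n + (m + 1))))) ?_
    (fun m => (phi_hasSum hx m).mul_left (Dd x m)) (h.cg (fun n => by ring) rfl) ?_
  · intro m n
    exact mul_nonneg (Dd_pos hx m).le (mul_nonneg (ee_nonneg hx n) (sub_nonneg.mpr (Qq_anti _ _)))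
  · intro n
    refine ((yy_hasSum hx n).mul_left (ee x n)).cg (fun m => ?_) rfl
    rw [show m + n + 1 = n + (m + 1) by ring]; ring

/-- value of H -/
theorem H_hasSum (hx : x ∈ Iv) :
    HasSum (fun n => 4 * x * (Pp x n * ee x n) * (Pb x n * hh x n))
      (2 * (aa x * s1 x + s2 x) + 2 * (aa x * s3 x + s4 x) - D1 x ^ 2) := by
  have h := ((((s1_hasSum hx).mul_left (aa x)).add (s2_hasSum hx)).mul_left 2).add
    ((ey_hasSum hx).mul_left 2)
  refine h.cg (fun n => ?_) (by ring)
  have := two_pp hx n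
  unfold yy
  have e : hh x n = aa x + pre Qq (n + 1) := rfl
  linear_combination 2 * ee x n * hh x n * this + 2 * ee x n * Dd x n * e

end

end

section

open Finset
set_option linter.unusedSimpArgs false

/-! Words and quasi-shuffle products -/

noncomputable def Wd (p q : ℕ → ℝ) : List (ℕ × ℕ) → ℕ → ℝ
  | [], _ => 1
  | l :: u, n => pre (fun k => p k ^ l.1 * q k ^ l.2 * Wd p q u k) n

def stf : List (ℕ × ℕ) → List (ℕ × ℕ) → List (List (ℕ × ℕ))
  | [], v => [v]
  | a :: u, [] => [a :: u]
  | a :: u, b :: v => (stf u (b :: v)).map (a :: ·) ++ ((stf (a :: u) v).map (b :: ·) ++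
      (stf u v).map ((a.1 + b.1, a.2 + b.2) :: ·))
termination_by u v => u.length + v.length

variable {p q : ℕ → ℝ}

theorem Wd_nil (n : ℕ) : Wd p q [] n = 1 := by simp [Wd]
theorem Wd_zero (l : ℕ × ℕ) (u : List (ℕ × ℕ)) : Wd p q (l :: u) 0 = 0 := by simp [Wd]
theorem Wd_succ (l : ℕ × ℕ) (u : List (ℕ × ℕ)) (n : ℕ) : Wd p q (l :: u) (n + 1) =
    Wd p q (l :: u) n + p n ^ l.1 * q n ^ l.2 * Wd p q u n := by
  simp only [Wd, pre_succ]

theorem map_cons_zero (l : ℕ × ℕ) (S : List (List (ℕ × ℕ))) :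
    ((S.map (l :: ·)).map (fun u => Wd p q u 0)).sum = 0 := by
  induction S with
  | nil => simp
  | cons a S ih => simp only [List.map_cons, List.sum_cons, ih, Wd_zero, add_zero]

theorem map_cons_succ (l : ℕ × ℕ) (S : List (List (ℕ × ℕ))) (n : ℕ) :
    ((S.map (l :: ·)).map (fun u => Wd p q u (n + 1))).sum =
      ((S.map (l :: ·)).map (fun u => Wd p q u n)).sum +
      p n ^ l.1 * q n ^ l.2 * (S.map (fun u => Wd p q u n)).sum := by
  induction S with
  | nil => simp
  | cons a S ih => simp only [List.map_cons, List.sum_cons, ih, Wd_succ]; ring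

theorem stf_mul (u v : List (ℕ × ℕ)) (n : ℕ) :
    Wd p q u n * Wd p q v n = ((stf u v).map (fun u => Wd p q u n)).sum := by
  induction hk : u.length + v.length using Nat.strong_induction_on generalizing u v n with
  | _ k ih =>
    match u, v with
    | [], v => simp [stf, Wd_nil]
    | a :: u, [] => simp [stf, Wd_nil]
    | a :: u, b :: v =>
      have h1 := fun n => ih (u.length + (b :: v).length) (by simp at hk ⊢; omega) u (b :: v) n rfl
      have h2 := fun n => ih ((a :: u).length + v.length) (by simp at hk ⊢; omega) (a :: u) v n rfl
      have h3 := fun n => ih (u.length + v.length) (by simp at hk ⊢; omega) u v n rfl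
      rw [stf]
      simp only [List.map_append, List.sum_append]
      clear ih hk
      induction n with
      | zero => simp only [Wd_zero, map_cons_zero]; ring
      | succ n ih =>
        simp only [map_cons_succ]
        rw [Wd_succ, Wd_succ, ← h1, ← h2, ← h3]
        simp only [pow_add]
        linear_combination ih

theorem pre_eq {f F : ℕ → ℝ} (h0 : F 0 = 0) (h : ∀ n, F (n + 1) = F n + f n) (N : ℕ) :
    pre f N = F N := by
  induction N with
  | zero => simp [h0]
  | succ n ih => rw [pre_succ, ih, h]


theorem w_p (N : ℕ) : pre p N =
    (1) * Wd p q [(1, 0)] N := by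
  refine pre_eq (F := fun N => (1) * Wd p q [(1, 0)] N) ?_ (fun n => ?_) N
  · simp only [Wd_zero]; ring
  · simp only [Wd_succ, Wd_nil]
    ring

theorem w_q (N : ℕ) : pre q N =
    (1) * Wd p q [(0, 1)] N := by
  refine pre_eq (F := fun N => (1) * Wd p q [(0, 1)] N) ?_ (fun n => ?_) N
  · simp only [Wd_zero]; ring
  · simp only [Wd_succ, Wd_nil]
    ring

theorem w_p2 (N : ℕ) : pre (fun n => p n ^ 2) N =
    (1) * Wd p q [(2, 0)] N := by
  refine pre_eq (F := fun N => (1) * Wd p q [(2, 0)] N) ?_ (fun n => ?_) N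
  · simp only [Wd_zero]; ring
  · simp only [Wd_succ, Wd_nil]
    ring

theorem w_2p3 (N : ℕ) : pre (fun n => 2 * p n ^ 3) N =
    (2) * Wd p q [(3, 0)] N := by
  refine pre_eq (F := fun N => (2) * Wd p q [(3, 0)] N) ?_ (fun n => ?_) N
  · simp only [Wd_zero]; ring
  · simp only [Wd_succ, Wd_nil]
    ring

theorem w_pp (N : ℕ) : pre (fun n => p n * pre p n) N =
    (1) * Wd p q [(1, 0), (1, 0)] N := by
  simp only [w_p (p := p) (q := q)]
  refine pre_eq (F := fun N => (1) * Wd p q [(1, 0), (1, 0)] N) ?_ (fun n => ?_) N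
  · simp only [Wd_zero]; ring
  · simp only [Wd_succ, Wd_nil]
    ring

theorem w_qp (N : ℕ) : pre (fun n => q n * pre p n) N =
    (1) * Wd p q [(0, 1), (1, 0)] N := by
  simp only [w_p (p := p) (q := q)]
  refine pre_eq (F := fun N => (1) * Wd p q [(0, 1), (1, 0)] N) ?_ (fun n => ?_) N
  · simp only [Wd_zero]; ring
  · simp only [Wd_succ, Wd_nil]
    ring

theorem w_ppp (N : ℕ) : pre (fun n => p n * pre (fun k => p k * pre p k) n) N =
    (1) * Wd p q [(1, 0), (1, 0), (1, 0)] N := by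
  simp only [w_pp (p := p) (q := q)]
  refine pre_eq (F := fun N => (1) * Wd p q [(1, 0), (1, 0), (1, 0)] N) ?_ (fun n => ?_) N
  · simp only [Wd_zero]; ring
  · simp only [Wd_succ, Wd_nil]
    ring

theorem w_dp (N : ℕ) : pre (fun n => (p n - q n) * pre p n) N =
    (-1) * Wd p q [(0, 1), (1, 0)] N + (1) * Wd p q [(1, 0), (1, 0)] N := by
  simp only [w_p (p := p) (q := q)]
  refine pre_eq (F := fun N => (-1) * Wd p q [(0, 1), (1, 0)] N + (1) * Wd p q [(1, 0), (1, 0)] N) ?_ (fun n => ?_) N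
  · simp only [Wd_zero]; ring
  · simp only [Wd_succ, Wd_nil]
    ring

theorem w_pdp (N : ℕ) : pre (fun n => p n * pre (fun k => (p k - q k) * pre p k) n) N =
    (-1) * Wd p q [(1, 0), (0, 1), (1, 0)] N + (1) * Wd p q [(1, 0), (1, 0), (1, 0)] N := by
  simp only [w_dp (p := p) (q := q)]
  refine pre_eq (F := fun N => (-1) * Wd p q [(1, 0), (0, 1), (1, 0)] N + (1) * Wd p q [(1, 0), (1, 0), (1, 0)] N) ?_ (fun n => ?_) N
  · simp only [Wd_zero]; ring
  · simp only [Wd_succ, Wd_nil]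
    ring

theorem w_dq (N : ℕ) : pre (fun n => (p n - q n) * q n) N =
    (-1) * Wd p q [(0, 2)] N + (1) * Wd p q [(1, 1)] N := by
  refine pre_eq (F := fun N => (-1) * Wd p q [(0, 2)] N + (1) * Wd p q [(1, 1)] N) ?_ (fun n => ?_) N
  · simp only [Wd_zero]; ring
  · simp only [Wd_succ, Wd_nil]
    ring

theorem w_3d (N : ℕ) : pre (fun n => p n ^ 2 * pre p n + p n * pre (fun l => p l ^ 2) n) N =
    (1) * Wd p q [(1, 0), (2, 0)] N + (1) * Wd p q [(2, 0), (1, 0)] N := by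
  simp only [w_p (p := p) (q := q), w_p2 (p := p) (q := q)]
  refine pre_eq (F := fun N => (1) * Wd p q [(1, 0), (2, 0)] N + (1) * Wd p q [(2, 0), (1, 0)] N) ?_ (fun n => ?_) N
  · simp only [Wd_zero]; ring
  · simp only [Wd_succ, Wd_nil]
    ring

theorem e_A (N : ℕ) : pre (fun n => (p n - q n)) N =
    (-1) * Wd p q [(0, 1)] N + (1) * Wd p q [(1, 0)] N := by
  refine pre_eq (F := fun N => (-1) * Wd p q [(0, 1)] N + (1) * Wd p q [(1, 0)] N) ?_ (fun n => ?_) N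
  · simp only [Wd_zero]; ring
  · simp only [Wd_succ, Wd_nil]
    ring

theorem e_S1 (N : ℕ) : pre (fun n => (p n - q n) * pre (fun k => q k * pre p k) n) N =
    (-1) * Wd p q [(0, 1), (0, 1), (1, 0)] N + (1) * Wd p q [(1, 0), (0, 1), (1, 0)] N := by
  simp only [w_qp (p := p) (q := q)]
  refine pre_eq (F := fun N => (-1) * Wd p q [(0, 1), (0, 1), (1, 0)] N + (1) * Wd p q [(1, 0), (0, 1), (1, 0)] N) ?_ (fun n => ?_) N
  · simp only [Wd_zero]; ring
  · simp only [Wd_succ, Wd_nil]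
    ring

theorem mm0 (N : ℕ) : Wd p q [(0, 1), (1, 0)] N * Wd p q [(0, 1)] N =
    (2) * Wd p q [(0, 1), (0, 1), (1, 0)] N + (1) * Wd p q [(0, 1), (1, 0), (0, 1)] N + (1) * Wd p q [(0, 1), (1, 1)] N + (1) * Wd p q [(0, 2), (1, 0)] N := by
  have h := stf_mul (p := p) (q := q) [(0, 1), (1, 0)] [(0, 1)] N
  simp only [stf, List.map_cons, List.map_nil, List.cons_append, List.nil_append, List.sum_cons, List.sum_nil] at h
  norm_num at h
  linear_combination h

theorem e_S2 (N : ℕ) : pre (fun n => (p n - q n) * pre (fun k => q k * pre p k) n * pre q (n + 1)) N =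
    (-2) * Wd p q [(0, 1), (0, 1), (0, 1), (1, 0)] N + (-1) * Wd p q [(0, 1), (0, 1), (1, 0), (0, 1)] N + (-1) * Wd p q [(0, 1), (0, 1), (1, 1)] N + (-1) * Wd p q [(0, 1), (0, 2), (1, 0)] N + (-1) * Wd p q [(0, 2), (0, 1), (1, 0)] N + (2) * Wd p q [(1, 0), (0, 1), (0, 1), (1, 0)] N + (1) * Wd p q [(1, 0), (0, 1), (1, 0), (0, 1)] N + (1) * Wd p q [(1, 0), (0, 1), (1, 1)] N + (1) * Wd p q [(1, 0), (0, 2), (1, 0)] N + (1) * Wd p q [(1, 1), (0, 1), (1, 0)] N := by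
  simp only [w_qp (p := p) (q := q), w_q (p := p) (q := q)]
  refine pre_eq (F := fun N => (-2) * Wd p q [(0, 1), (0, 1), (0, 1), (1, 0)] N + (-1) * Wd p q [(0, 1), (0, 1), (1, 0), (0, 1)] N + (-1) * Wd p q [(0, 1), (0, 1), (1, 1)] N + (-1) * Wd p q [(0, 1), (0, 2), (1, 0)] N + (-1) * Wd p q [(0, 2), (0, 1), (1, 0)] N + (2) * Wd p q [(1, 0), (0, 1), (0, 1), (1, 0)] N + (1) * Wd p q [(1, 0), (0, 1), (1, 0), (0, 1)] N + (1) * Wd p q [(1, 0), (0, 1), (1, 1)] N + (1) * Wd p q [(1, 0), (0, 2), (1, 0)] N + (1) * Wd p q [(1, 1), (0, 1), (1, 0)] N) ?_ (fun n => ?_) N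
  · simp only [Wd_zero]; ring
  · simp only [Wd_succ, Wd_nil]
    linear_combination (-(p n - q n)) * mm0 n

theorem w_t2 (N : ℕ) : pre (fun n => q n * pre q (n + 1)) N =
    (1) * Wd p q [(0, 1), (0, 1)] N + (1) * Wd p q [(0, 2)] N := by
  simp only [w_q (p := p) (q := q)]
  refine pre_eq (F := fun N => (1) * Wd p q [(0, 1), (0, 1)] N + (1) * Wd p q [(0, 2)] N) ?_ (fun n => ?_) N
  · simp only [Wd_zero]; ring
  · simp only [Wd_succ, Wd_nil]
    ring

theorem w_t3 (N : ℕ) : pre (fun n => q n * pre (fun k => q k * pre q (k + 1)) (n + 1)) N =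
    (1) * Wd p q [(0, 1), (0, 1), (0, 1)] N + (1) * Wd p q [(0, 1), (0, 2)] N + (1) * Wd p q [(0, 2), (0, 1)] N + (1) * Wd p q [(0, 3)] N := by
  simp only [w_t2 (p := p) (q := q)]
  refine pre_eq (F := fun N => (1) * Wd p q [(0, 1), (0, 1), (0, 1)] N + (1) * Wd p q [(0, 1), (0, 2)] N + (1) * Wd p q [(0, 2), (0, 1)] N + (1) * Wd p q [(0, 3)] N) ?_ (fun n => ?_) N
  · simp only [Wd_zero]; ring
  · simp only [Wd_succ, Wd_nil]
    ring

theorem e_D1 (N : ℕ) : pre (fun n => (p n - q n) * pre q (n + 1)) N =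
    (-1) * Wd p q [(0, 1), (0, 1)] N + (-1) * Wd p q [(0, 2)] N + (1) * Wd p q [(1, 0), (0, 1)] N + (1) * Wd p q [(1, 1)] N := by
  simp only [w_q (p := p) (q := q)]
  refine pre_eq (F := fun N => (-1) * Wd p q [(0, 1), (0, 1)] N + (-1) * Wd p q [(0, 2)] N + (1) * Wd p q [(1, 0), (0, 1)] N + (1) * Wd p q [(1, 1)] N) ?_ (fun n => ?_) N
  · simp only [Wd_zero]; ring
  · simp only [Wd_succ, Wd_nil]
    ring

theorem e_S3 (N : ℕ) : pre (fun n => (p n - q n) * pre (fun k => q k * pre q (k + 1)) (n + 1)) N =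
    (-1) * Wd p q [(0, 1), (0, 1), (0, 1)] N + (-1) * Wd p q [(0, 1), (0, 2)] N + (-1) * Wd p q [(0, 2), (0, 1)] N + (-1) * Wd p q [(0, 3)] N + (1) * Wd p q [(1, 0), (0, 1), (0, 1)] N + (1) * Wd p q [(1, 0), (0, 2)] N + (1) * Wd p q [(1, 1), (0, 1)] N + (1) * Wd p q [(1, 2)] N := by
  simp only [w_t2 (p := p) (q := q)]
  refine pre_eq (F := fun N => (-1) * Wd p q [(0, 1), (0, 1), (0, 1)] N + (-1) * Wd p q [(0, 1), (0, 2)] N + (-1) * Wd p q [(0, 2), (0, 1)] N + (-1) * Wd p q [(0, 3)] N + (1) * Wd p q [(1, 0), (0, 1), (0, 1)] N + (1) * Wd p q [(1, 0), (0, 2)] N + (1) * Wd p q [(1, 1), (0, 1)] N + (1) * Wd p q [(1, 2)] N) ?_ (fun n => ?_) N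
  · simp only [Wd_zero]; ring
  · simp only [Wd_succ, Wd_nil]
    ring

theorem e_S4 (N : ℕ) : pre (fun n => (p n - q n) * pre (fun k => q k * pre (fun k => q k * pre q (k + 1)) (k + 1)) (n + 1)) N =
    (-1) * Wd p q [(0, 1), (0, 1), (0, 1), (0, 1)] N + (-1) * Wd p q [(0, 1), (0, 1), (0, 2)] N + (-1) * Wd p q [(0, 1), (0, 2), (0, 1)] N + (-1) * Wd p q [(0, 1), (0, 3)] N + (-1) * Wd p q [(0, 2), (0, 1), (0, 1)] N + (-1) * Wd p q [(0, 2), (0, 2)] N + (-1) * Wd p q [(0, 3), (0, 1)] N + (-1) * Wd p q [(0, 4)] N + (1) * Wd p q [(1, 0), (0, 1), (0, 1), (0, 1)] N + (1) * Wd p q [(1, 0), (0, 1), (0, 2)] N + (1) * Wd p q [(1, 0), (0, 2), (0, 1)] N + (1) * Wd p q [(1, 0), (0, 3)] N + (1) * Wd p q [(1, 1), (0, 1), (0, 1)] N + (1) * Wd p q [(1, 1), (0, 2)] N + (1) * Wd p q [(1, 2), (0, 1)] N + (1) * Wd p q [(1, 3)] N := by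
  simp only [w_t3 (p := p) (q := q)]
  refine pre_eq (F := fun N => (-1) * Wd p q [(0, 1), (0, 1), (0, 1), (0, 1)] N + (-1) * Wd p q [(0, 1), (0, 1), (0, 2)] N + (-1) * Wd p q [(0, 1), (0, 2), (0, 1)] N + (-1) * Wd p q [(0, 1), (0, 3)] N + (-1) * Wd p q [(0, 2), (0, 1), (0, 1)] N + (-1) * Wd p q [(0, 2), (0, 2)] N + (-1) * Wd p q [(0, 3), (0, 1)] N + (-1) * Wd p q [(0, 4)] N + (1) * Wd p q [(1, 0), (0, 1), (0, 1), (0, 1)] N + (1) * Wd p q [(1, 0), (0, 1), (0, 2)] N + (1) * Wd p q [(1, 0), (0, 2), (0, 1)] N + (1) * Wd p q [(1, 0), (0, 3)] N + (1) * Wd p q [(1, 1), (0, 1), (0, 1)] N + (1) * Wd p q [(1, 1), (0, 2)] N + (1) * Wd p q [(1, 2), (0, 1)] N + (1) * Wd p q [(1, 3)] N) ?_ (fun n => ?_) N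
  · simp only [Wd_zero]; ring
  · simp only [Wd_succ, Wd_nil]
    ring

theorem e_z2 (N : ℕ) : pre (fun n => (p n - q n) * pre p n - (p n - q n) * q n) N =
    (-1) * Wd p q [(0, 1), (1, 0)] N + (1) * Wd p q [(0, 2)] N + (1) * Wd p q [(1, 0), (1, 0)] N + (-1) * Wd p q [(1, 1)] N := by
  simp only [w_p (p := p) (q := q)]
  refine pre_eq (F := fun N => (-1) * Wd p q [(0, 1), (1, 0)] N + (1) * Wd p q [(0, 2)] N + (1) * Wd p q [(1, 0), (1, 0)] N + (-1) * Wd p q [(1, 1)] N) ?_ (fun n => ?_) N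
  · simp only [Wd_zero]; ring
  · simp only [Wd_succ, Wd_nil]
    ring

theorem e_z3d (N : ℕ) : pre (fun n => p n ^ 2 * pre (fun k => p k * pre p k) n + (p n - q n) * pre (fun k => p k ^ 2 * pre p k + p k * pre (fun l => p l ^ 2) k) n - p n ^ 2 * (q n * q n)) N =
    (-1) * Wd p q [(0, 1), (1, 0), (2, 0)] N + (-1) * Wd p q [(0, 1), (2, 0), (1, 0)] N + (1) * Wd p q [(1, 0), (1, 0), (2, 0)] N + (1) * Wd p q [(1, 0), (2, 0), (1, 0)] N + (1) * Wd p q [(2, 0), (1, 0), (1, 0)] N + (-1) * Wd p q [(2, 2)] N := by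
  simp only [w_pp (p := p) (q := q), w_3d (p := p) (q := q)]
  refine pre_eq (F := fun N => (-1) * Wd p q [(0, 1), (1, 0), (2, 0)] N + (-1) * Wd p q [(0, 1), (2, 0), (1, 0)] N + (1) * Wd p q [(1, 0), (1, 0), (2, 0)] N + (1) * Wd p q [(1, 0), (2, 0), (1, 0)] N + (1) * Wd p q [(2, 0), (1, 0), (1, 0)] N + (-1) * Wd p q [(2, 2)] N) ?_ (fun n => ?_) N
  · simp only [Wd_zero]; ring
  · simp only [Wd_succ, Wd_nil]
    ring

theorem e_zpqd (N : ℕ) : pre (fun n => p n ^ 2 * q n * pre p n + p n * q n * pre (fun k => p k ^ 2) n - p n ^ 2 * q n * q n) N =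
    (1) * Wd p q [(1, 1), (2, 0)] N + (1) * Wd p q [(2, 1), (1, 0)] N + (-1) * Wd p q [(2, 2)] N := by
  simp only [w_p (p := p) (q := q), w_p2 (p := p) (q := q)]
  refine pre_eq (F := fun N => (1) * Wd p q [(1, 1), (2, 0)] N + (1) * Wd p q [(2, 1), (1, 0)] N + (-1) * Wd p q [(2, 2)] N) ?_ (fun n => ?_) N
  · simp only [Wd_zero]; ring
  · simp only [Wd_succ, Wd_nil]
    ring

theorem e_z2dd (N : ℕ) : pre (fun n => (2 * p n ^ 3 * pre p n + p n ^ 2 * pre (fun k => p k ^ 2) n) + (p n ^ 2 * pre (fun k => p k ^ 2) n + (p n - q n) * pre (fun k => 2 * p k ^ 3) n) - 2 * p n ^ 3 * q n) N =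
    (-2) * Wd p q [(0, 1), (3, 0)] N + (2) * Wd p q [(1, 0), (3, 0)] N + (2) * Wd p q [(2, 0), (2, 0)] N + (2) * Wd p q [(3, 0), (1, 0)] N + (-2) * Wd p q [(3, 1)] N := by
  simp only [w_p (p := p) (q := q), w_p2 (p := p) (q := q), w_2p3 (p := p) (q := q)]
  refine pre_eq (F := fun N => (-2) * Wd p q [(0, 1), (3, 0)] N + (2) * Wd p q [(1, 0), (3, 0)] N + (2) * Wd p q [(2, 0), (2, 0)] N + (2) * Wd p q [(3, 0), (1, 0)] N + (-2) * Wd p q [(3, 1)] N) ?_ (fun n => ?_) N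
  · simp only [Wd_zero]; ring
  · simp only [Wd_succ, Wd_nil]
    ring

theorem e_zpqpp (N : ℕ) : pre (fun n => p n * q n * pre (fun k => p k * pre p k) n - p n * q n * (q n * q n)) N =
    (1) * Wd p q [(1, 1), (1, 0), (1, 0)] N + (-1) * Wd p q [(1, 3)] N := by
  simp only [w_pp (p := p) (q := q)]
  refine pre_eq (F := fun N => (1) * Wd p q [(1, 1), (1, 0), (1, 0)] N + (-1) * Wd p q [(1, 3)] N) ?_ (fun n => ?_) N
  · simp only [Wd_zero]; ring
  · simp only [Wd_succ, Wd_nil]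
    ring

theorem e_z22 (N : ℕ) : pre (fun n => (p n - q n) * pre (fun k => p k * pre (fun k => (p k - q k) * pre p k) k) n - ((p n - q n) * q n) * pre (fun k => (p k - q k) * q k) n) N =
    (1) * Wd p q [(0, 1), (1, 0), (0, 1), (1, 0)] N + (-1) * Wd p q [(0, 1), (1, 0), (1, 0), (1, 0)] N + (-1) * Wd p q [(0, 2), (0, 2)] N + (1) * Wd p q [(0, 2), (1, 1)] N + (-1) * Wd p q [(1, 0), (1, 0), (0, 1), (1, 0)] N + (1) * Wd p q [(1, 0), (1, 0), (1, 0), (1, 0)] N + (1) * Wd p q [(1, 1), (0, 2)] N + (-1) * Wd p q [(1, 1), (1, 1)] N := by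
  simp only [w_pdp (p := p) (q := q), w_dq (p := p) (q := q)]
  refine pre_eq (F := fun N => (1) * Wd p q [(0, 1), (1, 0), (0, 1), (1, 0)] N + (-1) * Wd p q [(0, 1), (1, 0), (1, 0), (1, 0)] N + (-1) * Wd p q [(0, 2), (0, 2)] N + (1) * Wd p q [(0, 2), (1, 1)] N + (-1) * Wd p q [(1, 0), (1, 0), (0, 1), (1, 0)] N + (1) * Wd p q [(1, 0), (1, 0), (1, 0), (1, 0)] N + (1) * Wd p q [(1, 1), (0, 2)] N + (-1) * Wd p q [(1, 1), (1, 1)] N) ?_ (fun n => ?_) N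
  · simp only [Wd_zero]; ring
  · simp only [Wd_succ, Wd_nil]
    ring

theorem e_z4 (N : ℕ) : pre (fun n => (p n - q n) * pre (fun k => p k * pre (fun k => p k * pre p k) k) n - (p n - q n) * (q n * (q n * q n))) N =
    (-1) * Wd p q [(0, 1), (1, 0), (1, 0), (1, 0)] N + (1) * Wd p q [(0, 4)] N + (1) * Wd p q [(1, 0), (1, 0), (1, 0), (1, 0)] N + (-1) * Wd p q [(1, 3)] N := by
  simp only [w_ppp (p := p) (q := q)]
  refine pre_eq (F := fun N => (-1) * Wd p q [(0, 1), (1, 0), (1, 0), (1, 0)] N + (1) * Wd p q [(0, 4)] N + (1) * Wd p q [(1, 0), (1, 0), (1, 0), (1, 0)] N + (-1) * Wd p q [(1, 3)] N) ?_ (fun n => ?_) N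
  · simp only [Wd_zero]; ring
  · simp only [Wd_succ, Wd_nil]
    ring

theorem e_Sr (N : ℕ) : pre (fun n => p n ^ 2 + 2 * (p n * q n) - 3 * q n ^ 2) N =
    (-3) * Wd p q [(0, 2)] N + (2) * Wd p q [(1, 1)] N + (1) * Wd p q [(2, 0)] N := by
  refine pre_eq (F := fun N => (-3) * Wd p q [(0, 2)] N + (2) * Wd p q [(1, 1)] N + (1) * Wd p q [(2, 0)] N) ?_ (fun n => ?_) N
  · simp only [Wd_zero]; ring
  · simp only [Wd_succ, Wd_nil]
    ring

theorem e_Sg (N : ℕ) : pre (fun n => p n ^ 4 / 2 + 2 * (p n ^ 3 * q n) + 3 * (p n ^ 2 * q n ^ 2) + 2 * (p n * q n ^ 3) - 15 / 2 * q n ^ 4) N =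
    (-15 / 2) * Wd p q [(0, 4)] N + (2) * Wd p q [(1, 3)] N + (3) * Wd p q [(2, 2)] N + (2) * Wd p q [(3, 1)] N + (1 / 2) * Wd p q [(4, 0)] N := by
  refine pre_eq (F := fun N => (-15 / 2) * Wd p q [(0, 4)] N + (2) * Wd p q [(1, 3)] N + (3) * Wd p q [(2, 2)] N + (2) * Wd p q [(3, 1)] N + (1 / 2) * Wd p q [(4, 0)] N) ?_ (fun n => ?_) N
  · simp only [Wd_zero]; ring
  · simp only [Wd_succ, Wd_nil]
    ring

theorem e_K (N : ℕ) : pre (fun n => -((p n - q n) * pre p n) - 2 * p n ^ 2 - p n * q n + 3 * q n ^ 2) N =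
    (1) * Wd p q [(0, 1), (1, 0)] N + (3) * Wd p q [(0, 2)] N + (-1) * Wd p q [(1, 0), (1, 0)] N + (-1) * Wd p q [(1, 1)] N + (-2) * Wd p q [(2, 0)] N := by
  simp only [w_p (p := p) (q := q)]
  refine pre_eq (F := fun N => (1) * Wd p q [(0, 1), (1, 0)] N + (3) * Wd p q [(0, 2)] N + (-1) * Wd p q [(1, 0), (1, 0)] N + (-1) * Wd p q [(1, 1)] N + (-2) * Wd p q [(2, 0)] N) ?_ (fun n => ?_) N
  · simp only [Wd_zero]; ring
  · simp only [Wd_succ, Wd_nil]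
    ring

theorem mm1 (N : ℕ) : Wd p q [(0, 1)] N * Wd p q [(0, 1), (0, 1), (0, 1)] N =
    (4) * Wd p q [(0, 1), (0, 1), (0, 1), (0, 1)] N + (1) * Wd p q [(0, 1), (0, 1), (0, 2)] N + (1) * Wd p q [(0, 1), (0, 2), (0, 1)] N + (1) * Wd p q [(0, 2), (0, 1), (0, 1)] N := by
  have h := stf_mul (p := p) (q := q) [(0, 1)] [(0, 1), (0, 1), (0, 1)] N
  simp only [stf, List.map_cons, List.map_nil, List.cons_append, List.nil_append, List.sum_cons, List.sum_nil] at h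
  norm_num at h
  linear_combination h

theorem mm2 (N : ℕ) : Wd p q [(0, 1)] N * Wd p q [(0, 1), (0, 1), (1, 0)] N =
    (3) * Wd p q [(0, 1), (0, 1), (0, 1), (1, 0)] N + (1) * Wd p q [(0, 1), (0, 1), (1, 0), (0, 1)] N + (1) * Wd p q [(0, 1), (0, 1), (1, 1)] N + (1) * Wd p q [(0, 1), (0, 2), (1, 0)] N + (1) * Wd p q [(0, 2), (0, 1), (1, 0)] N := by
  have h := stf_mul (p := p) (q := q) [(0, 1)] [(0, 1), (0, 1), (1, 0)] N
  simp only [stf, List.map_cons, List.map_nil, List.cons_append, List.nil_append, List.sum_cons, List.sum_nil] at h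
  norm_num at h
  linear_combination h

theorem mm3 (N : ℕ) : Wd p q [(0, 1)] N * Wd p q [(0, 1), (0, 2)] N =
    (2) * Wd p q [(0, 1), (0, 1), (0, 2)] N + (1) * Wd p q [(0, 1), (0, 2), (0, 1)] N + (1) * Wd p q [(0, 1), (0, 3)] N + (1) * Wd p q [(0, 2), (0, 2)] N := by
  have h := stf_mul (p := p) (q := q) [(0, 1)] [(0, 1), (0, 2)] N
  simp only [stf, List.map_cons, List.map_nil, List.cons_append, List.nil_append, List.sum_cons, List.sum_nil] at h
  norm_num at h
  linear_combination h

theorem mm4 (N : ℕ) : Wd p q [(0, 1)] N * Wd p q [(0, 2), (0, 1)] N =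
    (1) * Wd p q [(0, 1), (0, 2), (0, 1)] N + (2) * Wd p q [(0, 2), (0, 1), (0, 1)] N + (1) * Wd p q [(0, 2), (0, 2)] N + (1) * Wd p q [(0, 3), (0, 1)] N := by
  have h := stf_mul (p := p) (q := q) [(0, 1)] [(0, 2), (0, 1)] N
  simp only [stf, List.map_cons, List.map_nil, List.cons_append, List.nil_append, List.sum_cons, List.sum_nil] at h
  norm_num at h
  linear_combination h

theorem mm5 (N : ℕ) : Wd p q [(0, 1)] N * Wd p q [(0, 3)] N =
    (1) * Wd p q [(0, 1), (0, 3)] N + (1) * Wd p q [(0, 3), (0, 1)] N + (1) * Wd p q [(0, 4)] N := by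
  have h := stf_mul (p := p) (q := q) [(0, 1)] [(0, 3)] N
  simp only [stf, List.map_cons, List.map_nil, List.cons_append, List.nil_append, List.sum_cons, List.sum_nil] at h
  norm_num at h
  linear_combination h

theorem mm6 (N : ℕ) : Wd p q [(0, 1)] N * Wd p q [(1, 0), (0, 1), (0, 1)] N =
    (1) * Wd p q [(0, 1), (1, 0), (0, 1), (0, 1)] N + (3) * Wd p q [(1, 0), (0, 1), (0, 1), (0, 1)] N + (1) * Wd p q [(1, 0), (0, 1), (0, 2)] N + (1) * Wd p q [(1, 0), (0, 2), (0, 1)] N + (1) * Wd p q [(1, 1), (0, 1), (0, 1)] N := by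
  have h := stf_mul (p := p) (q := q) [(0, 1)] [(1, 0), (0, 1), (0, 1)] N
  simp only [stf, List.map_cons, List.map_nil, List.cons_append, List.nil_append, List.sum_cons, List.sum_nil] at h
  norm_num at h
  linear_combination h

theorem mm7 (N : ℕ) : Wd p q [(0, 1)] N * Wd p q [(1, 0), (0, 1), (1, 0)] N =
    (1) * Wd p q [(0, 1), (1, 0), (0, 1), (1, 0)] N + (2) * Wd p q [(1, 0), (0, 1), (0, 1), (1, 0)] N + (1) * Wd p q [(1, 0), (0, 1), (1, 0), (0, 1)] N + (1) * Wd p q [(1, 0), (0, 1), (1, 1)] N + (1) * Wd p q [(1, 0), (0, 2), (1, 0)] N + (1) * Wd p q [(1, 1), (0, 1), (1, 0)] N := by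
  have h := stf_mul (p := p) (q := q) [(0, 1)] [(1, 0), (0, 1), (1, 0)] N
  simp only [stf, List.map_cons, List.map_nil, List.cons_append, List.nil_append, List.sum_cons, List.sum_nil] at h
  norm_num at h
  linear_combination h

theorem mm8 (N : ℕ) : Wd p q [(0, 1)] N * Wd p q [(1, 0), (0, 2)] N =
    (1) * Wd p q [(0, 1), (1, 0), (0, 2)] N + (1) * Wd p q [(1, 0), (0, 1), (0, 2)] N + (1) * Wd p q [(1, 0), (0, 2), (0, 1)] N + (1) * Wd p q [(1, 0), (0, 3)] N + (1) * Wd p q [(1, 1), (0, 2)] N := by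
  have h := stf_mul (p := p) (q := q) [(0, 1)] [(1, 0), (0, 2)] N
  simp only [stf, List.map_cons, List.map_nil, List.cons_append, List.nil_append, List.sum_cons, List.sum_nil] at h
  norm_num at h
  linear_combination h

theorem mm9 (N : ℕ) : Wd p q [(0, 1)] N * Wd p q [(1, 1), (0, 1)] N =
    (1) * Wd p q [(0, 1), (1, 1), (0, 1)] N + (2) * Wd p q [(1, 1), (0, 1), (0, 1)] N + (1) * Wd p q [(1, 1), (0, 2)] N + (1) * Wd p q [(1, 2), (0, 1)] N := by
  have h := stf_mul (p := p) (q := q) [(0, 1)] [(1, 1), (0, 1)] N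
  simp only [stf, List.map_cons, List.map_nil, List.cons_append, List.nil_append, List.sum_cons, List.sum_nil] at h
  norm_num at h
  linear_combination h

theorem mm10 (N : ℕ) : Wd p q [(0, 1)] N * Wd p q [(1, 2)] N =
    (1) * Wd p q [(0, 1), (1, 2)] N + (1) * Wd p q [(1, 2), (0, 1)] N + (1) * Wd p q [(1, 3)] N := by
  have h := stf_mul (p := p) (q := q) [(0, 1)] [(1, 2)] N
  simp only [stf, List.map_cons, List.map_nil, List.cons_append, List.nil_append, List.sum_cons, List.sum_nil] at h
  norm_num at h
  linear_combination h

theorem mm11 (N : ℕ) : Wd p q [(0, 1), (0, 1)] N * Wd p q [(0, 1), (0, 1)] N =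
    (6) * Wd p q [(0, 1), (0, 1), (0, 1), (0, 1)] N + (2) * Wd p q [(0, 1), (0, 1), (0, 2)] N + (2) * Wd p q [(0, 1), (0, 2), (0, 1)] N + (2) * Wd p q [(0, 2), (0, 1), (0, 1)] N + (1) * Wd p q [(0, 2), (0, 2)] N := by
  have h := stf_mul (p := p) (q := q) [(0, 1), (0, 1)] [(0, 1), (0, 1)] N
  simp only [stf, List.map_cons, List.map_nil, List.cons_append, List.nil_append, List.sum_cons, List.sum_nil] at h
  norm_num at h
  linear_combination h

theorem mm12 (N : ℕ) : Wd p q [(0, 1), (0, 1)] N * Wd p q [(0, 2)] N =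
    (1) * Wd p q [(0, 1), (0, 1), (0, 2)] N + (1) * Wd p q [(0, 1), (0, 2), (0, 1)] N + (1) * Wd p q [(0, 1), (0, 3)] N + (1) * Wd p q [(0, 2), (0, 1), (0, 1)] N + (1) * Wd p q [(0, 3), (0, 1)] N := by
  have h := stf_mul (p := p) (q := q) [(0, 1), (0, 1)] [(0, 2)] N
  simp only [stf, List.map_cons, List.map_nil, List.cons_append, List.nil_append, List.sum_cons, List.sum_nil] at h
  norm_num at h
  linear_combination h

theorem mm13 (N : ℕ) : Wd p q [(0, 1), (0, 1)] N * Wd p q [(1, 0), (0, 1)] N =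
    (1) * Wd p q [(0, 1), (0, 1), (1, 0), (0, 1)] N + (2) * Wd p q [(0, 1), (1, 0), (0, 1), (0, 1)] N + (1) * Wd p q [(0, 1), (1, 0), (0, 2)] N + (1) * Wd p q [(0, 1), (1, 1), (0, 1)] N + (3) * Wd p q [(1, 0), (0, 1), (0, 1), (0, 1)] N + (1) * Wd p q [(1, 0), (0, 1), (0, 2)] N + (1) * Wd p q [(1, 0), (0, 2), (0, 1)] N + (2) * Wd p q [(1, 1), (0, 1), (0, 1)] N + (1) * Wd p q [(1, 1), (0, 2)] N := by
  have h := stf_mul (p := p) (q := q) [(0, 1), (0, 1)] [(1, 0), (0, 1)] N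
  simp only [stf, List.map_cons, List.map_nil, List.cons_append, List.nil_append, List.sum_cons, List.sum_nil] at h
  norm_num at h
  linear_combination h

theorem mm14 (N : ℕ) : Wd p q [(0, 1), (0, 1)] N * Wd p q [(1, 1)] N =
    (1) * Wd p q [(0, 1), (0, 1), (1, 1)] N + (1) * Wd p q [(0, 1), (1, 1), (0, 1)] N + (1) * Wd p q [(0, 1), (1, 2)] N + (1) * Wd p q [(1, 1), (0, 1), (0, 1)] N + (1) * Wd p q [(1, 2), (0, 1)] N := by
  have h := stf_mul (p := p) (q := q) [(0, 1), (0, 1)] [(1, 1)] N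
  simp only [stf, List.map_cons, List.map_nil, List.cons_append, List.nil_append, List.sum_cons, List.sum_nil] at h
  norm_num at h
  linear_combination h

theorem mm15 (N : ℕ) : Wd p q [(0, 1), (0, 1), (0, 1)] N * Wd p q [(1, 0)] N =
    (1) * Wd p q [(0, 1), (0, 1), (0, 1), (1, 0)] N + (1) * Wd p q [(0, 1), (0, 1), (1, 0), (0, 1)] N + (1) * Wd p q [(0, 1), (0, 1), (1, 1)] N + (1) * Wd p q [(0, 1), (1, 0), (0, 1), (0, 1)] N + (1) * Wd p q [(0, 1), (1, 1), (0, 1)] N + (1) * Wd p q [(1, 0), (0, 1), (0, 1), (0, 1)] N + (1) * Wd p q [(1, 1), (0, 1), (0, 1)] N := by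
  have h := stf_mul (p := p) (q := q) [(0, 1), (0, 1), (0, 1)] [(1, 0)] N
  simp only [stf, List.map_cons, List.map_nil, List.cons_append, List.nil_append, List.sum_cons, List.sum_nil] at h
  norm_num at h
  linear_combination h

theorem mm16 (N : ℕ) : Wd p q [(0, 1), (0, 1), (1, 0)] N * Wd p q [(1, 0)] N =
    (2) * Wd p q [(0, 1), (0, 1), (1, 0), (1, 0)] N + (1) * Wd p q [(0, 1), (0, 1), (2, 0)] N + (1) * Wd p q [(0, 1), (1, 0), (0, 1), (1, 0)] N + (1) * Wd p q [(0, 1), (1, 1), (1, 0)] N + (1) * Wd p q [(1, 0), (0, 1), (0, 1), (1, 0)] N + (1) * Wd p q [(1, 1), (0, 1), (1, 0)] N := by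
  have h := stf_mul (p := p) (q := q) [(0, 1), (0, 1), (1, 0)] [(1, 0)] N
  simp only [stf, List.map_cons, List.map_nil, List.cons_append, List.nil_append, List.sum_cons, List.sum_nil] at h
  norm_num at h
  linear_combination h

theorem mm17 (N : ℕ) : Wd p q [(0, 1), (0, 2)] N * Wd p q [(1, 0)] N =
    (1) * Wd p q [(0, 1), (0, 2), (1, 0)] N + (1) * Wd p q [(0, 1), (1, 0), (0, 2)] N + (1) * Wd p q [(0, 1), (1, 2)] N + (1) * Wd p q [(1, 0), (0, 1), (0, 2)] N + (1) * Wd p q [(1, 1), (0, 2)] N := by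
  have h := stf_mul (p := p) (q := q) [(0, 1), (0, 2)] [(1, 0)] N
  simp only [stf, List.map_cons, List.map_nil, List.cons_append, List.nil_append, List.sum_cons, List.sum_nil] at h
  norm_num at h
  linear_combination h

theorem mm18 (N : ℕ) : Wd p q [(0, 1), (1, 0)] N * Wd p q [(0, 1), (1, 0)] N =
    (4) * Wd p q [(0, 1), (0, 1), (1, 0), (1, 0)] N + (2) * Wd p q [(0, 1), (0, 1), (2, 0)] N + (2) * Wd p q [(0, 1), (1, 0), (0, 1), (1, 0)] N + (2) * Wd p q [(0, 1), (1, 1), (1, 0)] N + (2) * Wd p q [(0, 2), (1, 0), (1, 0)] N + (1) * Wd p q [(0, 2), (2, 0)] N := by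
  have h := stf_mul (p := p) (q := q) [(0, 1), (1, 0)] [(0, 1), (1, 0)] N
  simp only [stf, List.map_cons, List.map_nil, List.cons_append, List.nil_append, List.sum_cons, List.sum_nil] at h
  norm_num at h
  linear_combination h

theorem mm19 (N : ℕ) : Wd p q [(0, 1), (1, 0)] N * Wd p q [(0, 2)] N =
    (1) * Wd p q [(0, 1), (0, 2), (1, 0)] N + (1) * Wd p q [(0, 1), (1, 0), (0, 2)] N + (1) * Wd p q [(0, 1), (1, 2)] N + (1) * Wd p q [(0, 2), (0, 1), (1, 0)] N + (1) * Wd p q [(0, 3), (1, 0)] N := by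
  have h := stf_mul (p := p) (q := q) [(0, 1), (1, 0)] [(0, 2)] N
  simp only [stf, List.map_cons, List.map_nil, List.cons_append, List.nil_append, List.sum_cons, List.sum_nil] at h
  norm_num at h
  linear_combination h

theorem mm20 (N : ℕ) : Wd p q [(0, 1), (1, 0)] N * Wd p q [(1, 0), (1, 0)] N =
    (3) * Wd p q [(0, 1), (1, 0), (1, 0), (1, 0)] N + (1) * Wd p q [(0, 1), (1, 0), (2, 0)] N + (1) * Wd p q [(0, 1), (2, 0), (1, 0)] N + (2) * Wd p q [(1, 0), (0, 1), (1, 0), (1, 0)] N + (1) * Wd p q [(1, 0), (0, 1), (2, 0)] N + (1) * Wd p q [(1, 0), (1, 0), (0, 1), (1, 0)] N + (1) * Wd p q [(1, 0), (1, 1), (1, 0)] N + (2) * Wd p q [(1, 1), (1, 0), (1, 0)] N + (1) * Wd p q [(1, 1), (2, 0)] N := by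
  have h := stf_mul (p := p) (q := q) [(0, 1), (1, 0)] [(1, 0), (1, 0)] N
  simp only [stf, List.map_cons, List.map_nil, List.cons_append, List.nil_append, List.sum_cons, List.sum_nil] at h
  norm_num at h
  linear_combination h

theorem mm21 (N : ℕ) : Wd p q [(0, 1), (1, 0)] N * Wd p q [(2, 0)] N =
    (1) * Wd p q [(0, 1), (1, 0), (2, 0)] N + (1) * Wd p q [(0, 1), (2, 0), (1, 0)] N + (1) * Wd p q [(0, 1), (3, 0)] N + (1) * Wd p q [(2, 0), (0, 1), (1, 0)] N + (1) * Wd p q [(2, 1), (1, 0)] N := by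
  have h := stf_mul (p := p) (q := q) [(0, 1), (1, 0)] [(2, 0)] N
  simp only [stf, List.map_cons, List.map_nil, List.cons_append, List.nil_append, List.sum_cons, List.sum_nil] at h
  norm_num at h
  linear_combination h

theorem mm22 (N : ℕ) : Wd p q [(0, 2)] N * Wd p q [(0, 2)] N =
    (2) * Wd p q [(0, 2), (0, 2)] N + (1) * Wd p q [(0, 4)] N := by
  have h := stf_mul (p := p) (q := q) [(0, 2)] [(0, 2)] N
  simp only [stf, List.map_cons, List.map_nil, List.cons_append, List.nil_append, List.sum_cons, List.sum_nil] at h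
  norm_num at h
  linear_combination h

theorem mm23 (N : ℕ) : Wd p q [(0, 2)] N * Wd p q [(1, 0), (0, 1)] N =
    (1) * Wd p q [(0, 2), (1, 0), (0, 1)] N + (1) * Wd p q [(1, 0), (0, 1), (0, 2)] N + (1) * Wd p q [(1, 0), (0, 2), (0, 1)] N + (1) * Wd p q [(1, 0), (0, 3)] N + (1) * Wd p q [(1, 2), (0, 1)] N := by
  have h := stf_mul (p := p) (q := q) [(0, 2)] [(1, 0), (0, 1)] N
  simp only [stf, List.map_cons, List.map_nil, List.cons_append, List.nil_append, List.sum_cons, List.sum_nil] at h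
  norm_num at h
  linear_combination h

theorem mm24 (N : ℕ) : Wd p q [(0, 2)] N * Wd p q [(1, 0), (1, 0)] N =
    (1) * Wd p q [(0, 2), (1, 0), (1, 0)] N + (1) * Wd p q [(1, 0), (0, 2), (1, 0)] N + (1) * Wd p q [(1, 0), (1, 0), (0, 2)] N + (1) * Wd p q [(1, 0), (1, 2)] N + (1) * Wd p q [(1, 2), (1, 0)] N := by
  have h := stf_mul (p := p) (q := q) [(0, 2)] [(1, 0), (1, 0)] N
  simp only [stf, List.map_cons, List.map_nil, List.cons_append, List.nil_append, List.sum_cons, List.sum_nil] at h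
  norm_num at h
  linear_combination h

theorem mm25 (N : ℕ) : Wd p q [(0, 2)] N * Wd p q [(2, 0)] N =
    (1) * Wd p q [(0, 2), (2, 0)] N + (1) * Wd p q [(2, 0), (0, 2)] N + (1) * Wd p q [(2, 2)] N := by
  have h := stf_mul (p := p) (q := q) [(0, 2)] [(2, 0)] N
  simp only [stf, List.map_cons, List.map_nil, List.cons_append, List.nil_append, List.sum_cons, List.sum_nil] at h
  norm_num at h
  linear_combination h

theorem mm26 (N : ℕ) : Wd p q [(0, 2), (0, 1)] N * Wd p q [(1, 0)] N =
    (1) * Wd p q [(0, 2), (0, 1), (1, 0)] N + (1) * Wd p q [(0, 2), (1, 0), (0, 1)] N + (1) * Wd p q [(0, 2), (1, 1)] N + (1) * Wd p q [(1, 0), (0, 2), (0, 1)] N + (1) * Wd p q [(1, 2), (0, 1)] N := by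
  have h := stf_mul (p := p) (q := q) [(0, 2), (0, 1)] [(1, 0)] N
  simp only [stf, List.map_cons, List.map_nil, List.cons_append, List.nil_append, List.sum_cons, List.sum_nil] at h
  norm_num at h
  linear_combination h

theorem mm27 (N : ℕ) : Wd p q [(0, 3)] N * Wd p q [(1, 0)] N =
    (1) * Wd p q [(0, 3), (1, 0)] N + (1) * Wd p q [(1, 0), (0, 3)] N + (1) * Wd p q [(1, 3)] N := by
  have h := stf_mul (p := p) (q := q) [(0, 3)] [(1, 0)] N
  simp only [stf, List.map_cons, List.map_nil, List.cons_append, List.nil_append, List.sum_cons, List.sum_nil] at h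
  norm_num at h
  linear_combination h

theorem mm28 (N : ℕ) : Wd p q [(1, 0)] N * Wd p q [(1, 0), (0, 1), (0, 1)] N =
    (1) * Wd p q [(1, 0), (0, 1), (0, 1), (1, 0)] N + (1) * Wd p q [(1, 0), (0, 1), (1, 0), (0, 1)] N + (1) * Wd p q [(1, 0), (0, 1), (1, 1)] N + (2) * Wd p q [(1, 0), (1, 0), (0, 1), (0, 1)] N + (1) * Wd p q [(1, 0), (1, 1), (0, 1)] N + (1) * Wd p q [(2, 0), (0, 1), (0, 1)] N := by
  have h := stf_mul (p := p) (q := q) [(1, 0)] [(1, 0), (0, 1), (0, 1)] N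
  simp only [stf, List.map_cons, List.map_nil, List.cons_append, List.nil_append, List.sum_cons, List.sum_nil] at h
  norm_num at h
  linear_combination h

theorem mm29 (N : ℕ) : Wd p q [(1, 0)] N * Wd p q [(1, 0), (0, 1), (1, 0)] N =
    (2) * Wd p q [(1, 0), (0, 1), (1, 0), (1, 0)] N + (1) * Wd p q [(1, 0), (0, 1), (2, 0)] N + (2) * Wd p q [(1, 0), (1, 0), (0, 1), (1, 0)] N + (1) * Wd p q [(1, 0), (1, 1), (1, 0)] N + (1) * Wd p q [(2, 0), (0, 1), (1, 0)] N := by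
  have h := stf_mul (p := p) (q := q) [(1, 0)] [(1, 0), (0, 1), (1, 0)] N
  simp only [stf, List.map_cons, List.map_nil, List.cons_append, List.nil_append, List.sum_cons, List.sum_nil] at h
  norm_num at h
  linear_combination h

theorem mm30 (N : ℕ) : Wd p q [(1, 0)] N * Wd p q [(1, 0), (0, 2)] N =
    (1) * Wd p q [(1, 0), (0, 2), (1, 0)] N + (2) * Wd p q [(1, 0), (1, 0), (0, 2)] N + (1) * Wd p q [(1, 0), (1, 2)] N + (1) * Wd p q [(2, 0), (0, 2)] N := by
  have h := stf_mul (p := p) (q := q) [(1, 0)] [(1, 0), (0, 2)] N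
  simp only [stf, List.map_cons, List.map_nil, List.cons_append, List.nil_append, List.sum_cons, List.sum_nil] at h
  norm_num at h
  linear_combination h

theorem mm31 (N : ℕ) : Wd p q [(1, 0)] N * Wd p q [(1, 1), (0, 1)] N =
    (1) * Wd p q [(1, 0), (1, 1), (0, 1)] N + (1) * Wd p q [(1, 1), (0, 1), (1, 0)] N + (1) * Wd p q [(1, 1), (1, 0), (0, 1)] N + (1) * Wd p q [(1, 1), (1, 1)] N + (1) * Wd p q [(2, 1), (0, 1)] N := by
  have h := stf_mul (p := p) (q := q) [(1, 0)] [(1, 1), (0, 1)] N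
  simp only [stf, List.map_cons, List.map_nil, List.cons_append, List.nil_append, List.sum_cons, List.sum_nil] at h
  norm_num at h
  linear_combination h

theorem mm32 (N : ℕ) : Wd p q [(1, 0)] N * Wd p q [(1, 2)] N =
    (1) * Wd p q [(1, 0), (1, 2)] N + (1) * Wd p q [(1, 2), (1, 0)] N + (1) * Wd p q [(2, 2)] N := by
  have h := stf_mul (p := p) (q := q) [(1, 0)] [(1, 2)] N
  simp only [stf, List.map_cons, List.map_nil, List.cons_append, List.nil_append, List.sum_cons, List.sum_nil] at h
  norm_num at h
  linear_combination h

theorem mm33 (N : ℕ) : Wd p q [(1, 0), (0, 1)] N * Wd p q [(1, 0), (0, 1)] N =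
    (2) * Wd p q [(1, 0), (0, 1), (1, 0), (0, 1)] N + (4) * Wd p q [(1, 0), (1, 0), (0, 1), (0, 1)] N + (2) * Wd p q [(1, 0), (1, 0), (0, 2)] N + (2) * Wd p q [(1, 0), (1, 1), (0, 1)] N + (2) * Wd p q [(2, 0), (0, 1), (0, 1)] N + (1) * Wd p q [(2, 0), (0, 2)] N := by
  have h := stf_mul (p := p) (q := q) [(1, 0), (0, 1)] [(1, 0), (0, 1)] N
  simp only [stf, List.map_cons, List.map_nil, List.cons_append, List.nil_append, List.sum_cons, List.sum_nil] at h
  norm_num at h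
  linear_combination h

theorem mm34 (N : ℕ) : Wd p q [(1, 0), (0, 1)] N * Wd p q [(1, 1)] N =
    (1) * Wd p q [(1, 0), (0, 1), (1, 1)] N + (1) * Wd p q [(1, 0), (1, 1), (0, 1)] N + (1) * Wd p q [(1, 0), (1, 2)] N + (1) * Wd p q [(1, 1), (1, 0), (0, 1)] N + (1) * Wd p q [(2, 1), (0, 1)] N := by
  have h := stf_mul (p := p) (q := q) [(1, 0), (0, 1)] [(1, 1)] N
  simp only [stf, List.map_cons, List.map_nil, List.cons_append, List.nil_append, List.sum_cons, List.sum_nil] at h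
  norm_num at h
  linear_combination h

theorem mm35 (N : ℕ) : Wd p q [(1, 0), (1, 0)] N * Wd p q [(1, 0), (1, 0)] N =
    (6) * Wd p q [(1, 0), (1, 0), (1, 0), (1, 0)] N + (2) * Wd p q [(1, 0), (1, 0), (2, 0)] N + (2) * Wd p q [(1, 0), (2, 0), (1, 0)] N + (2) * Wd p q [(2, 0), (1, 0), (1, 0)] N + (1) * Wd p q [(2, 0), (2, 0)] N := by
  have h := stf_mul (p := p) (q := q) [(1, 0), (1, 0)] [(1, 0), (1, 0)] N
  simp only [stf, List.map_cons, List.map_nil, List.cons_append, List.nil_append, List.sum_cons, List.sum_nil] at h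
  norm_num at h
  linear_combination h

theorem mm36 (N : ℕ) : Wd p q [(1, 0), (1, 0)] N * Wd p q [(2, 0)] N =
    (1) * Wd p q [(1, 0), (1, 0), (2, 0)] N + (1) * Wd p q [(1, 0), (2, 0), (1, 0)] N + (1) * Wd p q [(1, 0), (3, 0)] N + (1) * Wd p q [(2, 0), (1, 0), (1, 0)] N + (1) * Wd p q [(3, 0), (1, 0)] N := by
  have h := stf_mul (p := p) (q := q) [(1, 0), (1, 0)] [(2, 0)] N
  simp only [stf, List.map_cons, List.map_nil, List.cons_append, List.nil_append, List.sum_cons, List.sum_nil] at h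
  norm_num at h
  linear_combination h

theorem mm37 (N : ℕ) : Wd p q [(2, 0)] N * Wd p q [(2, 0)] N =
    (2) * Wd p q [(2, 0), (2, 0)] N + (1) * Wd p q [(4, 0)] N := by
  have h := stf_mul (p := p) (q := q) [(2, 0)] [(2, 0)] N
  simp only [stf, List.map_cons, List.map_nil, List.cons_append, List.nil_append, List.sum_cons, List.sum_nil] at h
  norm_num at h
  linear_combination h

theorem mm38 (N : ℕ) : Wd p q [(0, 1)] N * Wd p q [(0, 1)] N =
    (2) * Wd p q [(0, 1), (0, 1)] N + (1) * Wd p q [(0, 2)] N := by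
  have h := stf_mul (p := p) (q := q) [(0, 1)] [(0, 1)] N
  simp only [stf, List.map_cons, List.map_nil, List.cons_append, List.nil_append, List.sum_cons, List.sum_nil] at h
  norm_num at h
  linear_combination h

theorem mm39 (N : ℕ) : Wd p q [(0, 1)] N * Wd p q [(1, 0)] N =
    (1) * Wd p q [(0, 1), (1, 0)] N + (1) * Wd p q [(1, 0), (0, 1)] N + (1) * Wd p q [(1, 1)] N := by
  have h := stf_mul (p := p) (q := q) [(0, 1)] [(1, 0)] N
  simp only [stf, List.map_cons, List.map_nil, List.cons_append, List.nil_append, List.sum_cons, List.sum_nil] at h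
  norm_num at h
  linear_combination h

theorem mm40 (N : ℕ) : Wd p q [(1, 0)] N * Wd p q [(1, 0)] N =
    (2) * Wd p q [(1, 0), (1, 0)] N + (1) * Wd p q [(2, 0)] N := by
  have h := stf_mul (p := p) (q := q) [(1, 0)] [(1, 0)] N
  simp only [stf, List.map_cons, List.map_nil, List.cons_append, List.nil_append, List.sum_cons, List.sum_nil] at h
  norm_num at h
  linear_combination h

set_option maxHeartbeats 4000000 in
theorem w_final (N : ℕ) :
    1 / 2 * pre (fun n => p n ^ 2 + 2 * (p n * q n) - 3 * q n ^ 2) N ^ 2 + 2 * (pre (fun n => (p n - q n)) N * pre (fun n => (p n - q n) * pre (fun k => q k * pre p k) n) N + pre (fun n => (p n - q n) * pre (fun k => q k * pre p k) n * pre q (n + 1)) N) + 2 * (pre (fun n => (p n - q n)) N * pre (fun n => (p n - q n) * pre (fun k => q k * pre q (k + 1)) (n + 1)) N + pre (fun n => (p n - q n) * pre (fun k => q k * pre (fun k => q k * pre q (k + 1)) (k + 1)) (n + 1)) N) - pre (fun n => (p n - q n) * pre q (n + 1)) N ^ 2 - pre (fun n => p n ^ 4 / 2 + 2 * (p n ^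 3 * q n) + 3 * (p n ^ 2 * q n ^ 2) + 2 * (p n * q n ^ 3) - 15 / 2 * q n ^ 4) N =
   4 * pre (fun n => p n ^ 2 * pre (fun k => p k * pre p k) n + (p n - q n) * pre (fun k => p k ^ 2 * pre p k + p k * pre (fun l => p l ^ 2) k) n - p n ^ 2 * (q n * q n)) N - 2 * pre (fun n => p n ^ 2 * q n * pre p n + p n * q n * pre (fun k => p k ^ 2) n - p n ^ 2 * q n * q n) N + pre (fun n => (2 * p n ^ 3 * pre p n + p n ^ 2 * pre (fun k => p k ^ 2) n) + (p n ^ 2 * pre (fun k => p k ^ 2) n + (p n - q n) * pre (fun k => 2 * p k ^ 3) n) - 2 * p n ^ 3 * q n) N - 4 * pre (fun n => p n * q n * pre (fun k => p k * pre p k) n - p n * q n * (q n * q n)) N - 2 * pre (fun n => (p n - q n) * pre (fun k => p k * pre (fun k => (p k - q k) * pre p k) k) n - ((p n - q n) * q n) * pre (fun k => (p k - q k) * q k) n) N + 8 * pre (fun n => (p n - q n) * pre (fun k => p k * pre (fun k => p k * pre p k) k) n - (p n - q n) * (q n * (q n * q n))) N + pre (fun n => -((p n - q n) * pre p n) - 2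 * p n ^ 2 - p n * q n + 3 * q n ^ 2) N * pre (fun n => (p n - q n) * pre p n - (p n - q n) * q n) N := by
  rw [e_A (p := p) (q := q), e_S1 (p := p) (q := q), e_S2 (p := p) (q := q), e_S3 (p := p) (q := q), e_S4 (p := p) (q := q), e_D1 (p := p) (q := q), e_Sr (p := p) (q := q), e_Sg (p := p) (q := q), e_z3d (p := p) (q := q), e_zpqd (p := p) (q := q), e_z2dd (p := p) (q := q), e_zpqpp (p := p) (q := q), e_z22 (p := p) (q := q), e_z4 (p := p) (q := q), e_K (p := p) (q := q), e_z2 (p := p) (q := q)]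
  linear_combination (2) * mm1 N + (2) * mm2 N + (2) * mm3 N + (2) * mm4 N + (2) * mm5 N + (-2) * mm6 N + (-2) * mm7 N + (-2) * mm8 N + (-2) * mm9 N + (-2) * mm10 N + (-1) * mm11 N + (-2) * mm12 N + (2) * mm13 N + (2) * mm14 N + (-2) * mm15 N + (-2) * mm16 N + (-2) * mm17 N + (1) * mm18 N + (2) * mm19 N + (-2) * mm20 N + (-2) * mm21 N + (1 / 2) * mm22 N + (2) * mm23 N + (-2) * mm24 N + (-1) * mm25 N + (-2) * mm26 N + (-2) * mm27 N + (2) * mm28 N + (2) * mm29 N + (2) * mm30 N + (2) * mm31 N + (2) * mm32 N + (-1) * mm33 N + (-2) * mm34 N + (1) * mm35 N + (2) * mm36 N + (1 / 2) * mm37 N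

theorem w_asq (N : ℕ) :
    pre (fun n => (p n - q n)) N ^ 2 + 2 * pre (fun n => (p n - q n) * pre q (n + 1)) N = pre (fun n => p n ^ 2 + 2 * (p n * q n) - 3 * q n ^ 2) N + 2 * pre (fun n => (p n - q n) * pre p n - (p n - q n) * q n) N := by
  rw [e_A (p := p) (q := q), e_D1 (p := p) (q := q), e_Sr (p := p) (q := q), e_z2 (p := p) (q := q)]
  linear_combination (1) * mm38 N + (-2) * mm39 N + (1) * mm40 N

end

section

open Finset Filter

theorem HasSum.preT {f : ℕ → ℝ} {s : ℝ} (h : HasSum f s) : Tendsto (pre f) atTop (nhds s) :=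
  h.tendsto_sum_nat

noncomputable def gg (x : ℝ) (n : ℕ) : ℝ := Pp x n ^ 4 / 2 + 2 * (Pp x n ^ 3 * Qq n) +
  3 * (Pp x n ^ 2 * Qq n ^ 2) + 2 * (Pp x n * Qq n ^ 3) - 15 / 2 * Qq n ^ 4

theorem Q2_bd : Bd 2 0 (fun _ n => Qq n ^ 2) := (Qq_bd.mul Qq_bd).congr (fun x _ n => by ring)

theorem gg_summable {x : ℝ} (hx : x ∈ Iv) : Summable (gg x) := by
  have h1 : Bd 2 0 (fun x n => Pp x n ^ 4 / 2) :=
    (((P2_bd.mul P2_bd).cmul (1 / 2)).mono (i' := 2) (j' := 0) (by norm_num) (by norm_num)).congr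
      (fun x _ n => by ring)
  have h2 : Bd 2 0 (fun x n => 2 * (Pp x n ^ 3 * Qq n)) :=
    ((P3_bd.mul Qq_bd).cmul 2).mono (by norm_num) (by norm_num)
  have h3 : Bd 2 0 (fun x n => 3 * (Pp x n ^ 2 * Qq n ^ 2)) :=
    ((P2_bd.mul Q2_bd).cmul 3).mono (by norm_num) (by norm_num)
  have h4 : Bd 2 0 (fun x n => 2 * (Pp x n * Qq n ^ 3)) :=
    (((Pp_bd.mul (Q2_bd.mul Qq_bd)).cmul 2).mono (i' := 2) (j' := 0) (by norm_num)
      (by norm_num)).congr (fun x _ n => by ring)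
  have h5 : Bd 2 0 (fun x n => 15 / 2 * Qq n ^ 4) :=
    (((Q2_bd.mul Q2_bd).cmul (15 / 2)).mono (i' := 2) (j' := 0) (by norm_num)
      (by norm_num)).congr (fun x _ n => by ring)
  exact ((((h1.add h2).add h3).add h4).sub h5).summable le_rfl (by norm_num) hx

theorem G_value {x : ℝ} (hx : x ∈ Iv) :
    HasSum (gg x) (1 / 2 * (aa x ^ 2 + 2 * D1 x) ^ 2 +
      (2 * (aa x * s1 x + s2 x) + 2 * (aa x * s3 x + s4 x) - D1 x ^ 2)) := by
  have hr : Summable (fun n => Pp x n ^ 2 + 2 * (Pp x n * Qq n) - 3 * Qq n ^ 2) :=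
    ((P2_bd.add ((Pp_bd.mul Qq_bd).cmul 2)).sub (Q2_bd.cmul 3)).summable le_rfl (by norm_num) hx
  have hK : Summable (fun n => -(Dd x n * pre (Pp x) n) - 2 * Pp x n ^ 2 - Pp x n * Qq n +
      3 * Qq n ^ 2) :=
    (((((Dd_bd.mul Pp_bd.pre).neg).sub ((P2_bd.cmul 2).mono (by norm_num) (by norm_num))).sub
      ((Pp_bd.mul Qq_bd).mono (by norm_num) (by norm_num))).add
      ((Q2_bd.cmul 3).mono (by norm_num) (by norm_num))).summable (i := 2) (j := 1)
        le_rfl (by norm_num) hx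
  have tA := (aa_hasSum hx).preT
  have tD := (D1_hasSum hx).preT
  have t1 := (s1_hasSum hx).preT
  have t2 := (s2_hasSum hx).preT
  have t3 := (s3_hasSum hx).preT
  have t4 := (s4_hasSum hx).preT
  have tr := hr.hasSum.preT
  have tK := hK.hasSum.preT
  have tg := (gg_summable hx).hasSum.preT
  have u1 := (Z3_d x hx).preT
  have u2 := (Zpq_d x hx).preT
  have u3 := (Z2_dd x hx).preT
  have u4 := (Zpqpp x hx).preT
  have u5 := (Z22 x hx).preT
  have u6 := (Z4 x hx).preT
  have u7 := (Z2 x hx).preT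
  have hR : aa x ^ 2 + 2 * D1 x = ∑' n, (Pp x n ^ 2 + 2 * (Pp x n * Qq n) - 3 * Qq n ^ 2) + 2 * 0 := by
    refine tendsto_nhds_unique ((tA.pow 2).add (tD.const_mul 2)) ?_
    refine (tr.add (u7.const_mul 2)).congr (fun N => ?_)
    exact (w_asq (p := Pp x) (q := Qq) N).symm
  have hF := tendsto_nhds_unique (((((tr.pow 2).const_mul (1 / 2)).add
    (((tA.mul t1).add t2).const_mul 2)).add (((tA.mul t3).add t4).const_mul 2)).sub
    (tD.pow 2) |>.sub tg)
    ((((((((u1.const_mul 4).sub (u2.const_mul 2)).add u3).sub (u4.const_mul 4)).sub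
      (u5.const_mul 2)).add (u6.const_mul 8)).add (tK.mul u7)).congr
      (fun N => (w_final (p := Pp x) (q := Qq) N).symm))
  refine (gg_summable hx).hasSum.cg (fun n => rfl) ?_
  rw [mul_zero, add_zero] at hR
  rw [hR]
  linarith [hF]

end

section

open Finset Filter

namespace PS
open PowerSeries

noncomputable def th (f : ℝ⟦X⟧) : ℝ⟦X⟧ := PowerSeries.mk (fun k => (k : ℝ) * coeff k f)
noncomputable def sg : ℝ⟦X⟧ := PowerSeries.mk (fun _ => (1 : ℝ)) * X
noncomputable def Jj (y : ℝ) (f : ℝ⟦X⟧) : ℝ⟦X⟧ :=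
  PowerSeries.mk (fun k => (∑ j ∈ range k, coeff j f) / ((k : ℝ) - y))

theorem coeff_sg (f : ℝ⟦X⟧) (k : ℕ) : coeff k (f * sg) = ∑ j ∈ range k, coeff j f := by
  unfold sg
  rw [← mul_assoc]
  cases k with
  | zero => simp
  | succ n =>
    rw [coeff_succ_mul_X, coeff_mul]
    rw [Finset.Nat.sum_antidiagonal_eq_sum_range_succ
      (fun i j => coeff i f * coeff j (PowerSeries.mk (fun _ => (1 : ℝ)))) n]
    simp

theorem th_mul (f g : ℝ⟦X⟧) : th (f * g) = th f * g + f * th g := by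
  ext k
  simp only [th, coeff_mk, map_add, coeff_mul, mul_sum]
  rw [← sum_add_distrib]
  apply sum_congr rfl
  intro z hz
  have : (k : ℝ) = z.1 + z.2 := by exact_mod_cast (mem_antidiagonal.mp hz).symm
  rw [this]; ring

theorem th_add (f g : ℝ⟦X⟧) : th (f + g) = th f + th g := by
  ext k; simp [th]; ring
theorem th_sub (f g : ℝ⟦X⟧) : th (f - g) = th f - th g := by
  ext k; simp [th]; ring
theorem th_C (c : ℝ) : th (C c) = 0 := by
  ext k
  simp only [th, coeff_mk, coeff_C, map_zero]
  split_ifs with h <;> simp [h]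
theorem th_Cmul (c : ℝ) (g : ℝ⟦X⟧) : th (C c * g) = C c * th g := by
  rw [th_mul, th_C]; ring

theorem J_zero (y : ℝ) (f : ℝ⟦X⟧) : coeff 0 (Jj y f) = 0 := by simp [Jj]

theorem J_ode {y : ℝ} (hy : ∀ k : ℕ, ((k : ℝ) + 1) - y ≠ 0) (f : ℝ⟦X⟧) :
    th (Jj y f) = C y * Jj y f + f * sg := by
  ext k
  rw [map_add, coeff_sg, coeff_C_mul]
  simp only [th, Jj, coeff_mk]
  cases k with
  | zero => simp
  | succ n =>
    have := hy n
    push_cast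
    field_simp
    ring

/-- shifted coefficients -/
noncomputable def sh (F : ℝ⟦X⟧) (k : ℕ) : ℝ := coeff (k + 1) F

theorem sh_of_ode {y : ℝ} (hy : ∀ k : ℕ, ((k : ℝ) + 1) - y ≠ 0) {F f : ℝ⟦X⟧}
    (h : th F = C y * F + f * sg) (k : ℕ) :
    sh F k = 1 / ((k : ℝ) + 1 - y) * (coeff 0 f + pre (sh f) k) := by
  have h1 := congrArg (coeff (k + 1)) h
  rw [map_add, coeff_sg, coeff_C_mul, th, coeff_mk, sum_range_succ'] at h1
  have := hy k
  unfold sh pre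
  push_cast at h1
  rw [one_div, eq_inv_mul_iff_mul_eq₀ this]
  linear_combination h1

theorem coeff_zero_of_ode {y : ℝ} (hy : y ≠ 0) {F f : ℝ⟦X⟧}
    (h : th F = C y * F + f * sg) : coeff 0 F = 0 := by
  have h1 := congrArg (coeff 0) h
  rw [map_add, coeff_sg, coeff_C_mul, th, coeff_mk] at h1
  simpa [hy] using h1

theorem eq_of_ode {y : ℝ} (hy : ∀ k : ℕ, ((k : ℝ) + 1) - y ≠ 0) {F G f : ℝ⟦X⟧}
    (h : th F = C y * F + f * sg) (h' : th G = C y * G + f * sg) (h0 : coeff 0 F = coeff 0 G) :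
    F = G := by
  ext k
  cases k with
  | zero => exact h0
  | succ n =>
    have h1 := sh_of_ode hy h n
    have h2 := sh_of_ode hy h' n
    exact h1.trans h2.symm

theorem sum_of_prod {F : ℝ⟦X⟧} {a b : ℕ → ℝ} {κ s : ℝ}
    (h : th F = C κ * ((PowerSeries.mk a * X) * (PowerSeries.mk b * X))) (h0 : coeff 0 F = 0)
    (ha : ∀ n, 0 ≤ a n) (hb : ∀ n, 0 ≤ b n) (hκ : 0 ≤ κ)
    (hs : HasSum (fun z : ℕ × ℕ => κ * a z.1 * (b z.2 * Qq (z.1 + z.2 + 1))) s) :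
    (∀ k, 0 ≤ coeff k F) ∧ HasSum (fun k => coeff k F) s := by
  have e : ∀ k, coeff k (th F) = k * coeff k F := fun k => by rw [th, coeff_mk]
  have e2 : C κ * ((PowerSeries.mk a * X) * (PowerSeries.mk b * X)) = C κ * (PowerSeries.mk a * PowerSeries.mk b) * X * X := by ring
  rw [e2] at h
  have h1 : coeff 1 F = 0 := by
    have := e 1
    rw [h, coeff_succ_mul_X] at this
    simpa using this.symm
  have h2 : ∀ k, coeff (k + 2) F =
      ∑ z ∈ antidiagonal k, κ * a z.1 * (b z.2 * Qq (z.1 + z.2 + 1)) := by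
    intro k
    have := e (k + 2)
    rw [h, coeff_succ_mul_X, coeff_succ_mul_X, coeff_C_mul, coeff_mul] at this
    have hne : (k : ℝ) + 2 ≠ 0 := by positivity
    have e3 : ∑ z ∈ antidiagonal k, κ * a z.1 * (b z.2 * Qq (z.1 + z.2 + 1)) =
        1 / ((k : ℝ) + 2) * (κ * ∑ z ∈ antidiagonal k, coeff z.1 (PowerSeries.mk a) * coeff z.2 (PowerSeries.mk b)) := by
      rw [mul_sum, mul_sum]
      apply sum_congr rfl
      intro z hz
      have hz' := mem_antidiagonal.mp hz
      rw [hz', coeff_mk, coeff_mk]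
      unfold Qq; push_cast
      rw [show (k : ℝ) + 1 + 1 = k + 2 by ring]; ring
    rw [e3, this]
    push_cast
    field_simp
  constructor
  · intro k
    match k with
    | 0 => rw [h0]
    | 1 => rw [h1]
    | k + 2 =>
      rw [h2]
      apply sum_nonneg
      intro z _
      exact mul_nonneg (mul_nonneg hκ (ha _)) (mul_nonneg (hb _) (Qq_pos _).le)
  · have h3 := hasSum_antidiag (f := fun m n => κ * a m * (b n * Qq (m + n + 1))) hs
    have h4 := (hasSum_nat_add_iff (f := fun k => coeff k F) 2).mp (h3.cg (fun k => h2 k) rfl)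
    simpa [sum_range_succ, h0, h1] using h4

theorem sum_mul {F G : ℝ⟦X⟧} {s t : ℝ} (hF : ∀ k, 0 ≤ coeff k F) (hG : ∀ k, 0 ≤ coeff k G)
    (h1 : HasSum (fun k => coeff k F) s) (h2 : HasSum (fun k => coeff k G) t) :
    HasSum (fun k => coeff k (F * G)) (s * t) := by
  have := swap_summable (f := fun m n => coeff m F * coeff n G)
    (fun m n => mul_nonneg (hF m) (hG n)) (fun m => h2.mul_left (coeff m F)) (h1.mul_right t)
  exact (hasSum_antidiag (f := fun m n => coeff m F * coeff n G) this).cg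
    (fun k => coeff_mul _ _ _) rfl

theorem G_series {x : ℝ} (hx : x ∈ Iv) :
    HasSum (fun k => 12 * (Pc 4 x k - Pc 2 x k) *
        pre (fun k => Pc 3 x k * pre (fun k => Pc 2 x k * pre (Pc 1 x) k) k) k
      - 4 * (Pc 2 x k - Pc 0 x k) *
        pre (fun k => Pc 1 x k * pre (fun k => Pc 2 x k * pre (Pc 1 x) k) k) k)
      (1 / 2 * (aa x ^ 2 + 2 * D1 x) ^ 2 +
      (2 * (aa x * s1 x + s2 x) + 2 * (aa x * s3 x + s4 x) - D1 x ^ 2)) := by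
  have hy : ∀ c : ℝ, 0 ≤ c → c ≤ 4 → ∀ k : ℕ, ((k : ℝ) + 1) - c * x ≠ 0 := by
    intro c h0 h1 k
    have := Pc_den h0 h1 hx k
    have hn : (0 : ℝ) < ((k : ℝ) + 1) / 5 := by positivity
    linarith
  have hx0 := hx.1.ne'
  have y0 : ∀ k : ℕ, ((k : ℝ) + 1) - 0 * x ≠ 0 := hy 0 (by norm_num) (by norm_num)
  have y1 : ∀ k : ℕ, ((k : ℝ) + 1) - 1 * x ≠ 0 := hy 1 (by norm_num) (by norm_num)
  have y2 := hy 2 (by norm_num) (by norm_num)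
  have y3 := hy 3 (by norm_num) (by norm_num)
  have y4 := hy 4 (by norm_num) (by norm_num)
  set A := Jj (1 * x) 1 with hA
  set B := Jj (0 * x) A with hB
  set C3 := Jj (1 * x) B with hC3
  set D := Jj (0 * x) C3 with hD
  have oA : th A = C (1 * x) * A + 1 * sg := J_ode y1 1
  have oB : th B = C (0 * x) * B + A * sg := J_ode y0 A
  have oC : th C3 = C (1 * x) * C3 + B * sg := J_ode y1 B
  have oD : th D = C (0 * x) * D + C3 * sg := J_ode y0 C3
  have cA : coeff 0 A = 0 := J_zero _ _
  have cB : coeff 0 B = 0 := J_zero _ _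
  have cC : coeff 0 C3 = 0 := J_zero _ _
  have cD : coeff 0 D = 0 := J_zero _ _
  have k0 : (C (0 * x) : ℝ⟦X⟧) = 0 := by simp
  have k1 : (C (1 * x) : ℝ⟦X⟧) = C x := by simp
  have k2 : (C (2 * x) : ℝ⟦X⟧) = 2 * C x := by rw [map_mul, map_ofNat]
  have k3 : (C (3 * x) : ℝ⟦X⟧) = 3 * C x := by rw [map_mul, map_ofNat]
  have k4 : (C (4 * x) : ℝ⟦X⟧) = 4 * C x := by rw [map_mul, map_ofNat]
  have l2 : (2 : ℝ⟦X⟧) * C (1 / 2) = 1 := by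
    have : (2 : ℝ⟦X⟧) = C (2 : ℝ) := (map_ofNat _ 2).symm
    rw [this, ← map_mul]; norm_num
  have l6 : (6 : ℝ⟦X⟧) * C (1 / 6) = 1 := by
    have : (6 : ℝ⟦X⟧) = C (6 : ℝ) := (map_ofNat _ 6).symm
    rw [this, ← map_mul]; norm_num
  have l24 : (24 : ℝ⟦X⟧) * C (1 / 24) = 1 := by
    have : (24 : ℝ⟦X⟧) = C (24 : ℝ) := (map_ofNat _ 24).symm
    rw [this, ← map_mul]; norm_num
  rw [k1] at oA oC
  rw [k0] at oB oD
  have oZ2 : th (C (1 / 2) * (A * A)) = C (2 * x) * (C (1 / 2) * (A * A)) + A * sg := by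
    rw [th_Cmul, th_mul, oA, k2]
    linear_combination (A * sg) * l2
  have oZ3 : th (C (1 / 6) * (A * A * A)) =
      C (3 * x) * (C (1 / 6) * (A * A * A)) + (C (1 / 2) * (A * A)) * sg := by
    rw [th_Cmul, th_mul, th_mul, oA, k3]
    linear_combination (A * A * sg * C (1 / 2)) * l6 - (3 * C (1 / 6) * A * A * sg) * l2
  have oZ4 : th (C (1 / 24) * (A * A * A * A)) =
      C (4 * x) * (C (1 / 24) * (A * A * A * A)) + (C (1 / 6) * (A * A * A)) * sg := by
    rw [th_Cmul, th_mul, th_mul, th_mul, oA, k4]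
    linear_combination (A * A * A * sg * C (1 / 6)) * l24 - (4 * C (1 / 24) * A * A * A * sg) * l6
  have oM : th (C (1 / 2) * (A * B - C3)) =
      C (1 * x) * (C (1 / 2) * (A * B - C3)) + (C (1 / 2) * (A * A)) * sg := by
    rw [th_Cmul, th_sub, th_mul, oA, oB, oC, k1]
    ring
  have oAM : th (A * (C (1 / 2) * (A * B - C3))) =
      C (2 * x) * (A * (C (1 / 2) * (A * B - C3))) +
        (C 3 * (C (1 / 6) * (A * A * A)) + C (1 / 2) * (A * B - C3)) * sg := by
    rw [th_mul, oM, oA, k1, k2, show (C (3 : ℝ) : ℝ⟦X⟧) = 3 from map_ofNat _ 3]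
    linear_combination (- A * A * A * sg * C (1 / 2)) * l6 + (3 * C (1 / 6) * A * A * A * sg) * l2
  have oE : th (B * B - 2 * D) = C (0 * x) * (B * B - 2 * D) +
      (C 4 * (C (1 / 2) * (A * B - C3))) * sg := by
    have : th (2 * D) = 2 * th D := by
      rw [show (2 : ℝ⟦X⟧) = C (2 : ℝ) from (map_ofNat _ 2).symm, th_Cmul]
    rw [th_sub, th_mul, this, oB, oD, k0, show (C (4 : ℝ) : ℝ⟦X⟧) = 4 from map_ofNat _ 4]
    linear_combination (- 2 * (A * B - C3) * sg) * l2
  have sA : ∀ k, sh A k = Pc 1 x k := by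
    intro k
    rw [sh_of_ode (y := 1 * x) y1 (by rw [oA, k1]) k]
    have : sh (1 : ℝ⟦X⟧) = fun _ => 0 := by
      funext j
      simp [sh, coeff_one]
    rw [this]
    simp [Pc, pre]
  have sA' : sh A = Pc 1 x := funext sA
  have sB : sh B = fun k => Qq k * pre (Pp x) k := by
    funext k
    rw [sh_of_ode (y := 0 * x) y0 (by rw [oB, k0]) k, sA', cA, Pp_eq]
    simp [Qq]
  have sC : sh C3 = fun k => Pp x k * ee x k := by
    funext k
    rw [sh_of_ode (y := 1 * x) y1 (by rw [oC, k1]) k, sB, cB, Pp_eq]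
    simp [Pc, ee, Pp_eq]
  have sZ2 : sh (C (1 / 2) * (A * A)) = fun k => Pc 2 x k * pre (Pc 1 x) k := by
    funext k
    rw [sh_of_ode y2 oZ2, sA', cA, zero_add]; rfl
  have sZ3 : sh (C (1 / 6) * (A * A * A)) = fun k => Pc 3 x k *
      pre (fun k => Pc 2 x k * pre (Pc 1 x) k) k := by
    funext k
    rw [sh_of_ode y3 oZ3, sZ2]
    simp [Pc, cA, coeff_mul]
  have sM : sh (C (1 / 2) * (A * B - C3)) = fun k => Pc 1 x k *
      pre (fun k => Pc 2 x k * pre (Pc 1 x) k) k := by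
    funext k
    rw [sh_of_ode y1 oM, sZ2]
    simp [Pc, cA, coeff_mul]
  have cM : coeff 0 (C (1 / 2) * (A * B - C3)) = 0 := by
    rw [coeff_C_mul, map_sub, coeff_mul]; simp [cA, cC]
  have c3 : coeff 0 (C (1 / 6) * (A * A * A)) = 0 := by
    rw [coeff_C_mul, coeff_mul]; simp [cA, coeff_mul]
  have sh_add : ∀ F G : ℝ⟦X⟧, sh (F + G) = fun k => sh F k + sh G k := by
    intro F G; funext k; simp [sh]
  have sh_Cmul : ∀ (c : ℝ) (F : ℝ⟦X⟧), sh (C c * F) = fun k => c * sh F k := by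
    intro c F; funext k; simp [sh]
  have sZ4 : ∀ k, sh (C (1 / 24) * (A * A * A * A)) k = Pc 4 x k * pre (fun k => Pc 3 x k *
      pre (fun k => Pc 2 x k * pre (Pc 1 x) k) k) k := by
    intro k
    rw [sh_of_ode y4 oZ4, sZ3, c3, zero_add]; rfl
  have sAM : ∀ k, sh (A * (C (1 / 2) * (A * B - C3))) k = Pc 2 x k * (3 * pre (fun k => Pc 3 x k *
      pre (fun k => Pc 2 x k * pre (Pc 1 x) k) k) k + pre (fun k => Pc 1 x k *
      pre (fun k => Pc 2 x k * pre (Pc 1 x) k) k) k) := by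
    intro k
    rw [sh_of_ode y2 oAM, map_add, coeff_C_mul, c3, cM, sh_add, sh_Cmul, sZ3, sM, pre_add,
      pre_cmul]
    simp [Pc]
  have sE : ∀ k, sh (B * B - 2 * D) k = Pc 0 x k * (4 * pre (fun k => Pc 1 x k *
      pre (fun k => Pc 2 x k * pre (Pc 1 x) k) k) k) := by
    intro k
    rw [sh_of_ode y0 oE, coeff_C_mul, cM, sh_Cmul, sM, pre_cmul]
    simp [Pc]
  have eA : A = PowerSeries.mk (Pp x) * X := by
    ext k
    cases k with
    | zero => rw [cA]; simp
    | succ n => rw [coeff_succ_mul_X, coeff_mk, Pp_eq]; exact sA n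
  have eC : C3 = PowerSeries.mk (fun n => Pp x n * ee x n) * X := by
    ext k
    cases k with
    | zero => rw [cC]; simp
    | succ n => rw [coeff_succ_mul_X, coeff_mk]; exact congrFun sC n
  have hPp : ∀ n, 0 ≤ Pp x n := fun n => by
    rw [Pp_eq]; exact (Pc_pos (by norm_num) (by norm_num) hx n).le
  have th2 : ∀ F : ℝ⟦X⟧, th (2 * F) = 2 * th F := by
    intro F
    rw [show (2 : ℝ⟦X⟧) = C (2 : ℝ) from (map_ofNat _ 2).symm, th_Cmul]
  have oR : th (A * A - 2 * B) = C (2 * x) * ((PowerSeries.mk (Pp x) * X) *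
      (PowerSeries.mk (Pp x) * X)) := by
    rw [← eA, th_sub, th_mul, th2, oA, oB, k2]; ring
  have oH : th (2 * (A * C3) - B * B - 2 * D) =
      C (4 * x) * ((PowerSeries.mk (fun n => Pp x n * ee x n) * X) *
      (PowerSeries.mk (Pp x) * X)) := by
    rw [← eA, ← eC, th_sub, th_sub, th2, th2, th_mul, th_mul, oA, oB, oC, oD, k4]; ring
  have hx1 := hx.1
  have hR := sum_of_prod oR (by rw [map_sub, coeff_mul]; simp [cA, cB, coeff_mul]) hPp hPp
    (by positivity)
    (swap_summable (f := fun m n => 2 * x * Pp x m * (Pp x n * Qq (m + n + 1)))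
      (fun m n => mul_nonneg (mul_nonneg (by positivity) (hPp _))
        (mul_nonneg (hPp _) (Qq_pos _).le))
      (fun m => ((ker_one hx m).mul_left (2 * x * Pp x m)).cg
        (fun n => by rw [add_comm m n]) rfl) (R_hasSum hx))
  have hH := sum_of_prod oH
    (by rw [map_sub, map_sub, coeff_mul]; simp [cA, cB, cD, coeff_mul])
    (fun n => mul_nonneg (hPp n) (ee_nonneg hx n)) hPp (by positivity)
    (swap_summable (f := fun m n => 4 * x * (Pp x m * ee x m) * (Pp x n * Qq (m + n + 1)))
      (fun m n => mul_nonneg (mul_nonneg (by positivity) (mul_nonneg (hPp m) (ee_nonneg hx m)))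
        (mul_nonneg (hPp _) (Qq_pos _).le))
      (fun m => ((ker_one hx m).mul_left (4 * x * (Pp x m * ee x m))).cg
        (fun n => by rw [add_comm m n]) rfl) (H_hasSum hx))
  have hRR := sum_mul hR.1 hR.1 hR.2 hR.2
  have hG := (hRR.mul_left (1 / 2)).add hH.2
  have eG : ∀ k, 1 / 2 * coeff k ((A * A - 2 * B) * (A * A - 2 * B)) +
      coeff k (2 * (A * C3) - B * B - 2 * D) =
      12 * coeff k (C (1 / 24) * (A * A * A * A)) -
        4 * coeff k (A * (C (1 / 2) * (A * B - C3))) + coeff k (B * B - 2 * D) := by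
    intro k
    have e1 : C (1 / 2) * ((A * A - 2 * B) * (A * A - 2 * B)) + (2 * (A * C3) - B * B - 2 * D) =
      C 12 * (C (1 / 24) * (A * A * A * A)) - C 4 * (A * (C (1 / 2) * (A * B - C3))) +
        (B * B - 2 * D) := by
      have l24' : C (12 : ℝ) * C (1 / 24) = C (1 / 2) := by
        rw [← map_mul]; norm_num
      have l4' : (C (4 : ℝ) : ℝ⟦X⟧) = 4 := map_ofNat _ 4
      rw [l4']
      linear_combination (- A * A * A * A) * l24' + (2 * B * B - 2 * A * C3) * l2
    have e2 := congrArg (coeff k) e1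
    simpa only [map_add, map_sub, coeff_C_mul] using e2
  have hG' := (hasSum_nat_add_iff' 1).mpr hG
  refine hG'.cg (fun k => ?_) ?_
  · have q4 := sZ4 k
    have q2 := sAM k
    have q0 := sE k
    unfold sh at q4 q2 q0
    rw [eG, q4, q2, q0]
    ring
  · rw [sum_range_one, eG]
    have cB' : constantCoeff B = 0 := by simpa using cB
    have cD' : constantCoeff D = 0 := by simpa using cD
    simp [cA, cB', cD', coeff_mul]
    ring

end PS

end

open Finset Filter

abbrev K4 := {k : Fin 4 → ℕ // StrictAnti k ∧ ∀ i, 0 < k i}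

theorem iter_pre {β : Type*} {g : ℕ → β → ℝ} {G f : ℕ → ℝ} (hg : ∀ n b, 0 ≤ g n b)
    (hG : ∀ n, HasSum (g n) (G n)) (hf : ∀ n, 0 ≤ f n) (N : ℕ) :
    HasSum (fun z : ℕ × β => (if z.1 < N then f z.1 else 0) * g z.1 z.2)
      (pre (fun k => f k * G k) N) := by
  refine swap_summable (f := fun a b => (if a < N then f a else 0) * g a b) (fun a b => ?_)
    (fun a => (hG a).mul_left _) ((pre_hasSum_indicator (fun k => f k * G k) N).cg
      (fun n => ?_) rfl)
  · refine mul_nonneg ?_ (hg a b)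
    split_ifs
    · exact hf a
    · exact le_rfl
  · split_ifs <;> simp

theorem ite_nn {f : ℕ → ℝ} (hf : ∀ n, 0 ≤ f n) (a N : ℕ) : 0 ≤ (if a < N then f a else 0) := by
  split_ifs
  · exact hf a
  · exact le_rfl

theorem K4_hasSum {f0 f1 f2 f3 : ℕ → ℝ} {s : ℝ} (h0 : ∀ n, 0 ≤ f0 n) (h1 : ∀ n, 0 ≤ f1 n)
    (h2 : ∀ n, 0 ≤ f2 n) (h3 : ∀ n, 0 ≤ f3 n)
    (h : HasSum (fun k => f0 k * pre (fun k => f1 k * pre (fun k => f2 k * pre f3 k) k) k) s) :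
    HasSum (fun k : K4 => f0 (k.1 0 - 1) * (f1 (k.1 1 - 1) * (f2 (k.1 2 - 1) * f3 (k.1 3 - 1))))
      s := by
  have a3 := fun n => pre_hasSum_indicator f3 n
  have n3 : ∀ n k, 0 ≤ (if k < n then f3 k else 0) := fun n k => ite_nn h3 k n
  have a2 := fun n => iter_pre n3 a3 h2 n
  have n2 : ∀ n (z : ℕ × ℕ), 0 ≤ (if z.1 < n then f2 z.1 else 0) *
      (if z.2 < z.1 then f3 z.2 else 0) := fun n z => mul_nonneg (ite_nn h2 _ _) (n3 _ _)
  have a1 := fun n => iter_pre n2 a2 h1 n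
  have n1 : ∀ n (z : ℕ × ℕ × ℕ), 0 ≤ (if z.1 < n then f1 z.1 else 0) *
      ((if z.2.1 < z.1 then f2 z.2.1 else 0) *
      (if z.2.2 < z.2.1 then f3 z.2.2 else 0)) := fun n z => mul_nonneg (ite_nn h1 _ _) (n2 _ _)
  have a0 := swap_summable (f := fun n (z : ℕ × ℕ × ℕ) => f0 n * ((if z.1 < n then f1 z.1 else 0) *
      ((if z.2.1 < z.1 then f2 z.2.1 else 0) *
      (if z.2.2 < z.2.1 then f3 z.2.2 else 0)))) (fun n z => mul_nonneg (h0 n) (n1 n z))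
      (fun n => (a1 n).mul_left (f0 n)) h
  let e : K4 → ℕ × ℕ × ℕ × ℕ := fun k => (k.1 0 - 1, k.1 1 - 1, k.1 2 - 1, k.1 3 - 1)
  have lts : ∀ k : K4, (0 < k.1 0 ∧ 0 < k.1 1 ∧ 0 < k.1 2 ∧ 0 < k.1 3) ∧
      k.1 1 < k.1 0 ∧ k.1 2 < k.1 1 ∧ k.1 3 < k.1 2 := by
    intro k
    have p := k.2.2
    have q := k.2.1
    exact ⟨⟨p 0, p 1, p 2, p 3⟩, q (by decide), q (by decide), q (by decide)⟩
  have he : Function.Injective e := by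
    intro k l hkl
    obtain ⟨⟨p0, p1, p2, p3⟩, -⟩ := lts k
    obtain ⟨⟨q0, q1, q2, q3⟩, -⟩ := lts l
    simp only [e, Prod.mk.injEq] at hkl
    apply Subtype.ext
    funext i
    fin_cases i <;> simp <;> omega
  have hr : ∀ z, z ∉ Set.range e → f0 z.1 * ((if z.2.1 < z.1 then f1 z.2.1 else 0) *
      ((if z.2.2.1 < z.2.1 then f2 z.2.2.1 else 0) *
      (if z.2.2.2 < z.2.2.1 then f3 z.2.2.2 else 0))) = 0 := by
    rintro ⟨a, b, c, d⟩ hz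
    by_contra hne
    apply hz
    have l1 : b < a := by by_contra hh; simp [hh] at hne
    have l2 : c < b := by by_contra hh; simp [hh] at hne
    have l3 : d < c := by by_contra hh; simp [hh] at hne
    refine ⟨⟨![a + 1, b + 1, c + 1, d + 1], ?_, ?_⟩, ?_⟩
    · rw [Fin.strictAnti_iff_succ_lt]
      intro i
      fin_cases i <;> simp <;> omega
    · intro i
      fin_cases i <;> simp
    · simp [e]
  refine ((he.hasSum_iff hr).mpr a0).cg (fun k => ?_) rfl
  obtain ⟨⟨p0, p1, p2, p3⟩, l1, l2, l3⟩ := lts k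
  simp only [Function.comp, e]
  rw [if_pos (by omega), if_pos (by omega), if_pos (by omega)]

theorem cauchy_nn {p q : ℕ → ℝ} {s t : ℝ} (hp : ∀ k, 0 ≤ p k) (hq : ∀ k, 0 ≤ q k)
    (h1 : HasSum p s) (h2 : HasSum q t) :
    (∀ k, 0 ≤ ∑ z ∈ antidiagonal k, p z.1 * q z.2) ∧
    HasSum (fun k => ∑ z ∈ antidiagonal k, p z.1 * q z.2) (s * t) := by
  refine ⟨fun k => sum_nonneg fun z _ => mul_nonneg (hp _) (hq _), ?_⟩
  have := swap_summable (f := fun m n => p m * q n)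
    (fun m n => mul_nonneg (hp m) (hq n)) (fun m => h2.mul_left (p m)) (h1.mul_right t)
  exact hasSum_antidiag (f := fun m n => p m * q n) this

theorem Qx_lt {c x : ℝ} (hc0 : 0 ≤ c) (hc : c ≤ 4) (hx : x ∈ Iv) (n : ℕ) :
    0 ≤ c * x * Qq n ∧ c * x * Qq n < 1 := by
  obtain ⟨h0, h1⟩ := hx
  have hq := Qq_pos n
  have hq1 := Qq_le_one n
  refine ⟨by positivity, ?_⟩
  have : c * x ≤ 4 / 5 := by nlinarith
  nlinarith

theorem Pc_Qq {c x : ℝ} (hc0 : 0 ≤ c) (hc : c ≤ 4) (hx : x ∈ Iv) (n : ℕ) :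
    Pc c x n = Qq n * (1 - c * x * Qq n)⁻¹ := by
  have h1 := Pc_den hc0 hc hx n
  have hn : (0 : ℝ) < (n : ℝ) + 1 := by positivity
  have hd : (n : ℝ) + 1 - c * x ≠ 0 := by
    have : (0 : ℝ) < ((n : ℝ) + 1) / 5 := by positivity
    linarith
  have h2 : 1 - c * x * (1 / ((n : ℝ) + 1)) = ((n : ℝ) + 1 - c * x) / (n + 1) := by
    field_simp
  unfold Pc Qq
  rw [h2]
  field_simp

theorem Pc_geo {c x : ℝ} (hc0 : 0 ≤ c) (hc : c ≤ 4) (hx : x ∈ Iv) (n : ℕ) :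
    HasSum (fun j : ℕ => c ^ j * x ^ j * Qq n ^ (j + 1)) (Pc c x n) := by
  obtain ⟨h0, h1⟩ := Qx_lt hc0 hc hx n
  refine ((hasSum_geometric_of_lt_one h0 h1).mul_left (Qq n)).cg (fun j => ?_)
    (Pc_Qq hc0 hc hx n)
  rw [mul_pow, mul_pow]; ring

theorem Pc_sub_geo {c e x : ℝ} (hc0 : 0 ≤ c) (hc : c ≤ 4) (he0 : 0 ≤ e) (he : e ≤ 4)
    (hx : x ∈ Iv) (n : ℕ) :
    HasSum (fun j : ℕ => (c ^ (j + 1) - e ^ (j + 1)) * x ^ (j + 1) * Qq n ^ (j + 2))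
      (Pc c x n - Pc e x n) := by
  have h := (Pc_geo hc0 hc hx n).sub (Pc_geo he0 he hx n)
  refine ((hasSum_nat_add_iff' 1).mpr h).cg (fun j => by ring) ?_
  simp

theorem mzv4_summable (a b c d : ℕ) :
    Summable (fun k : K4 => Qq (k.1 0 - 1) ^ (a + 2) * (Qq (k.1 1 - 1) ^ (b + 1) *
      (Qq (k.1 2 - 1) ^ (c + 1) * Qq (k.1 3 - 1) ^ (d + 1)))) := by
  have hp : ∀ m : ℕ, Bd m 0 (fun _ n => Qq n ^ m) := fun m =>
    ⟨1, by norm_num, fun x _ n => by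
      rw [abs_of_pos (pow_pos (Qq_pos n) _)]; simp⟩
  have hp1 : ∀ m : ℕ, Bd 1 0 (fun _ n => Qq n ^ (m + 1)) := fun m =>
    (hp (m + 1)).mono (by omega) le_rfl
  have hp2 : Bd 2 0 (fun _ n => Qq n ^ (a + 2)) := (hp (a + 2)).mono (by omega) le_rfl
  have q2 := ((hp1 c).mul ((hp1 d).pre)).pre
  have q1 := ((hp1 b).mul q2).pre
  have q0 := hp2.mul q1
  have hx : (1 / 10 : ℝ) ∈ Iv := ⟨by norm_num, by norm_num⟩
  have s := q0.summable le_rfl (by norm_num) hx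
  have nn : ∀ m n, 0 ≤ Qq n ^ m := fun m n => (pow_pos (Qq_pos n) _).le
  exact (K4_hasSum (nn _) (nn _) (nn _) (nn _) s.hasSum).summable

theorem mzv4_eq (a b c d : ℕ) :
    mzv ![a, b, c, d] = ∑' k : K4, Qq (k.1 0 - 1) ^ a * (Qq (k.1 1 - 1) ^ b *
      (Qq (k.1 2 - 1) ^ c * Qq (k.1 3 - 1) ^ d)) := by
  unfold mzv
  apply tsum_congr
  intro k
  have hq : ∀ i, Qq (k.1 i - 1) = 1 / (k.1 i : ℝ) := by
    intro i
    have := k.2.2 i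
    unfold Qq
    rw [Nat.cast_sub (by omega)]
    simp
  rw [Fin.prod_univ_four]
  simp only [hq, div_pow, one_pow, Matrix.cons_val_zero, Matrix.cons_val_one, Matrix.cons_val]
  ring

/-- degree-`s` coefficient. -/
noncomputable def Cf (u : ℕ → ℝ) (c1 c2 c3 : ℝ) (s : ℕ) : ℝ :=
  ∑ z ∈ antidiagonal s, ∑ y ∈ antidiagonal z.2, ∑ t ∈ antidiagonal y.2,
    u z.1 * c1 ^ y.1 * c2 ^ t.1 * c3 ^ t.2 * mzv ![z.1 + 2, y.1 + 1, t.1 + 1, t.2 + 1]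

theorem part_series {x : ℝ} (hx : x ∈ Iv) {u : ℕ → ℝ} {U : ℕ → ℝ} {c1 c2 c3 S : ℝ}
    (hu : ∀ j, 0 ≤ u j)
    (hU : ∀ n, HasSum (fun j : ℕ => u j * x ^ (j + 1) * Qq n ^ (j + 2)) (U n))
    (h10 : 0 ≤ c1) (h14 : c1 ≤ 4) (h20 : 0 ≤ c2) (h24 : c2 ≤ 4) (h30 : 0 ≤ c3) (h34 : c3 ≤ 4)
    (hS : HasSum (fun k => U k * pre (fun k => Pc c1 x k * pre (fun k => Pc c2 x k *
      pre (Pc c3 x) k) k) k) S) :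
    HasSum (fun s => Cf u c1 c2 c3 s * x ^ (s + 1)) S := by
  have hx0 := hx.1
  have nU : ∀ n j, 0 ≤ u j * x ^ (j + 1) * Qq n ^ (j + 2) := fun n j =>
    mul_nonneg (mul_nonneg (hu j) (by positivity)) (pow_pos (Qq_pos n) _).le
  have nP : ∀ c : ℝ, 0 ≤ c → ∀ n (j : ℕ), 0 ≤ c ^ j * x ^ j * Qq n ^ (j + 1) := fun c hc n j =>
    mul_nonneg (mul_nonneg (by positivity) (by positivity)) (pow_pos (Qq_pos n) _).le
  have hK := K4_hasSum (fun n => (hU n).nonneg (nU n)) (fun n => (Pc_pos h10 h14 hx n).le)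
    (fun n => (Pc_pos h20 h24 hx n).le) (fun n => (Pc_pos h30 h34 hx n).le) hS
  have cau : ∀ m0 m1 m2 m3 : ℕ, _ := fun m0 m1 m2 m3 =>
    let A2 := cauchy_nn (nP c2 h20 m2) (nP c3 h30 m3) (Pc_geo h20 h24 hx m2) (Pc_geo h30 h34 hx m3)
    let A1 := cauchy_nn (nP c1 h10 m1) A2.1 (Pc_geo h10 h14 hx m1) A2.2
    cauchy_nn (nU m0) A1.1 (hU m0) A1.2
  have hsw := swap_hasSum' (fun k : K4 => (cau (k.1 0 - 1) (k.1 1 - 1) (k.1 2 - 1) (k.1 3 - 1)).1)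
    (fun k : K4 => (cau (k.1 0 - 1) (k.1 1 - 1) (k.1 2 - 1) (k.1 3 - 1)).2) hK
  refine hsw.2.cg (fun s => ?_) rfl
  have key : HasSum (fun k : K4 => ∑ z ∈ antidiagonal s, ∑ y ∈ antidiagonal z.2,
      ∑ t ∈ antidiagonal y.2, (u z.1 * c1 ^ y.1 * c2 ^ t.1 * c3 ^ t.2 * x ^ (s + 1)) *
      (Qq (k.1 0 - 1) ^ (z.1 + 2) * (Qq (k.1 1 - 1) ^ (y.1 + 1) *
      (Qq (k.1 2 - 1) ^ (t.1 + 1) * Qq (k.1 3 - 1) ^ (t.2 + 1)))))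
      (∑ z ∈ antidiagonal s, ∑ y ∈ antidiagonal z.2, ∑ t ∈ antidiagonal y.2,
        (u z.1 * c1 ^ y.1 * c2 ^ t.1 * c3 ^ t.2 * x ^ (s + 1)) *
          mzv ![z.1 + 2, y.1 + 1, t.1 + 1, t.2 + 1]) := by
    apply hasSum_sum; intro z _
    apply hasSum_sum; intro y _
    apply hasSum_sum; intro t _
    apply HasSum.mul_left
    rw [mzv4_eq]
    exact (mzv4_summable _ _ _ _).hasSum
  have e1 : Cf u c1 c2 c3 s * x ^ (s + 1) = ∑ z ∈ antidiagonal s, ∑ y ∈ antidiagonal z.2,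
      ∑ t ∈ antidiagonal y.2,
        (u z.1 * c1 ^ y.1 * c2 ^ t.1 * c3 ^ t.2 * x ^ (s + 1)) *
          mzv ![z.1 + 2, y.1 + 1, t.1 + 1, t.2 + 1] := by
    unfold Cf
    simp only [sum_mul]
    refine sum_congr rfl fun z _ => sum_congr rfl fun y _ => sum_congr rfl fun t _ => by ring
  rw [e1, ← key.tsum_eq]
  apply tsum_congr
  intro k
  refine sum_congr rfl fun z hz => ?_
  rw [mul_sum]
  refine sum_congr rfl fun y hy => ?_
  rw [mul_sum, mul_sum]
  refine sum_congr rfl fun t ht => ?_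
  have hs : s + 1 = (z.1 + 1) + y.1 + t.1 + t.2 := by
    have := mem_antidiagonal.mp hz
    have := mem_antidiagonal.mp hy
    have := mem_antidiagonal.mp ht
    omega
  rw [hs]; ring

theorem mzv1_eq (w : ℕ) : mzv ![w] = ∑' n : ℕ, Qq n ^ w := by
  unfold mzv
  let e : ℕ ≃ {k : Fin 1 → ℕ // StrictAnti k ∧ ∀ i, 0 < k i} :=
    { toFun := fun n => ⟨fun _ => n + 1, Subsingleton.strictAnti _, fun _ => Nat.succ_pos n⟩
      invFun := fun k => k.1 0 - 1
      left_inv := fun n => by simp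
      right_inv := fun k => by
        apply Subtype.ext
        funext i
        have := k.2.2 0
        rw [Subsingleton.elim i 0]
        simp only
        omega }
  rw [← e.tsum_eq]
  apply tsum_congr
  intro n
  simp [e, Qq]

theorem ch3 (m : ℕ) : ((m + 3).choose 3 : ℝ) = (m + 1) * (m + 2) * (m + 3) / 6 := by
  induction m with
  | zero => norm_num
  | succ m ih =>
    rw [show m + 1 + 3 = (m + 3) + 1 by ring, Nat.choose_succ_succ' (m + 3) 2]
    push_cast
    rw [ih, Nat.cast_choose_two]
    push_cast
    ring

theorem gg_geo {x : ℝ} (hx : x ∈ Iv) (n : ℕ) :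
    HasSum (fun s : ℕ => (2 + ((s + 5 : ℕ) - 3 : ℝ) * ((s + 5 : ℕ) + 2) * ((s + 5 : ℕ) + 7) / 12) *
      x ^ (s + 1) * Qq n ^ (s + 5)) (gg x n) := by
  obtain ⟨h0, h1⟩ := Qx_lt (c := 1) (by norm_num) (by norm_num) hx n
  rw [one_mul] at h0 h1
  have hr : ‖x * Qq n‖ < 1 := by rw [Real.norm_of_nonneg h0]; exact h1
  have g := fun k => hasSum_choose_mul_geometric_of_norm_lt_one k hr
  have hP : Pp x n = Qq n * (1 - x * Qq n)⁻¹ := by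
    rw [Pp_eq, Pc_Qq (by norm_num) (by norm_num) hx, one_mul]
  have h := ((((g 3).mul_left (1 / 2)).add ((g 2).mul_left 2)).add
    (((g 1).mul_left 3).add ((g 0).mul_left 2))).mul_left (Qq n ^ 4)
  refine ((hasSum_nat_add_iff' 1).mpr h).cg (fun s => ?_) ?_
  · rw [ch3, Nat.cast_choose_two]
    simp only [Nat.choose_one_right, Nat.choose_zero_right]
    push_cast
    rw [mul_pow]
    ring
  · unfold gg
    rw [hP]
    simp only [one_div, ← inv_pow, sum_range_one]
    generalize (1 - x * Qq n)⁻¹ = v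
    norm_num
    ring

theorem rhs_series {x : ℝ} (hx : x ∈ Iv) {S : ℝ} (hS : HasSum (gg x) S) :
    HasSum (fun s : ℕ => ((2 + ((s + 5 : ℕ) - 3 : ℝ) * ((s + 5 : ℕ) + 2) * ((s + 5 : ℕ) + 7) / 12) *
      mzv ![s + 5]) * x ^ (s + 1)) S := by
  have hx0 := hx.1
  have h := (swap_hasSum' (f := fun n (s : ℕ) => (2 + ((s + 5 : ℕ) - 3 : ℝ) * ((s + 5 : ℕ) + 2) *
    ((s + 5 : ℕ) + 7) / 12) * x ^ (s + 1) * Qq n ^ (s + 5)) (fun n s => ?_)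
    (fun n => gg_geo hx n) hS).2
  · refine h.cg (fun s => ?_) rfl
    rw [tsum_mul_left, mzv1_eq]; ring
  · have : (0 : ℝ) ≤ (2 + ((s + 5 : ℕ) - 3 : ℝ) * ((s + 5 : ℕ) + 2) * ((s + 5 : ℕ) + 7) / 12) := by
      have : ((s + 5 : ℕ) - 3 : ℝ) = s + 2 := by push_cast; ring
      rw [this]; positivity
    have := (Qq_pos n).le
    positivity

theorem coeff_uniq {c : ℕ → ℝ} (h : ∀ x ∈ Iv, HasSum (fun n => c n * x ^ n) 0) (n : ℕ) :
    c n = 0 := by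
  induction n using Nat.strong_induction_on with
  | _ n ih =>
    have h1 : ∀ x ∈ Iv, HasSum (fun k => c (k + n) * x ^ k) 0 := by
      intro x hx
      have h2 := (hasSum_nat_add_iff' n).mpr (h x hx)
      rw [sum_eq_zero (fun i hi => by rw [ih i (mem_range.mp hi), zero_mul]), sub_zero] at h2
      have hx0 := hx.1
      refine (h2.mul_left (x ^ n)⁻¹).cg (fun k => ?_) (by simp)
      rw [pow_add]; field_simp
    have h2 : ∀ x ∈ Iv, HasSum (fun k => c (k + 1 + n) * x ^ (k + 1)) (- c n) := by
      intro x hx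
      refine ((hasSum_nat_add_iff' 1).mpr (h1 x hx)).cg (fun k => rfl) (by simp)
    have hx0 : (1 / 10 : ℝ) ∈ Iv := ⟨by norm_num, by norm_num⟩
    have hs : Summable (fun k => |c (k + 1 + n)| * (1 / 10 : ℝ) ^ (k + 1)) :=
      (h2 _ hx0).summable.abs.congr (fun k => by rw [abs_mul, abs_pow]; norm_num)
    set T := ∑' k, |c (k + 1 + n)| * (1 / 10 : ℝ) ^ (k + 1) with hT
    have hb : ∀ y : ℝ, 0 < y → y ≤ 1 → |c n| ≤ y * T := by
      intro y hy hy1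
      have hx : y * (1 / 10) ∈ Iv := ⟨by positivity, by linarith⟩
      have h3 := h2 _ hx
      have h4 : HasSum (fun k => y * (|c (k + 1 + n)| * (1 / 10 : ℝ) ^ (k + 1))) (y * T) :=
        hs.hasSum.mul_left y
      have hle : ∀ k, |c (k + 1 + n) * (y * (1 / 10)) ^ (k + 1)| ≤
          y * (|c (k + 1 + n)| * (1 / 10 : ℝ) ^ (k + 1)) := by
        intro k
        rw [abs_mul, abs_of_pos (a := (y * (1 / 10)) ^ (k + 1)) (by positivity), mul_pow]
        have : y ^ (k + 1) ≤ y := by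
          rw [pow_succ]
          exact mul_le_of_le_one_left hy.le (pow_le_one₀ hy.le hy1)
        calc |c (k + 1 + n)| * (y ^ (k + 1) * (1 / 10) ^ (k + 1))
            = y ^ (k + 1) * (|c (k + 1 + n)| * (1 / 10) ^ (k + 1)) := by ring
          _ ≤ _ := by gcongr
      rw [abs_le]
      constructor
      · have := hasSum_le (fun k => (le_abs_self _).trans (hle k)) h3 h4
        linarith
      · have := hasSum_le (fun k => neg_le_of_abs_le (hle k)) h4.neg h3
        linarith
    by_contra hne
    have hpos : 0 < |c n| := abs_pos.mpr hne
    have hT1 := hb 1 one_pos le_rfl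
    rw [one_mul] at hT1
    have hTpos : 0 < T := lt_of_lt_of_le hpos hT1
    have := hb (|c n| / (2 * T)) (by positivity) (by
      rw [div_le_one (by positivity)]; linarith)
    have e : |c n| / (2 * T) * T = |c n| / 2 := by field_simp
    linarith

theorem Icc_anti (m n : ℕ) (f : ℕ → ℝ) :
    ∑ a ∈ Icc m (m + n), f a = ∑ z ∈ antidiagonal n, f (z.1 + m) := by
  rw [Finset.Nat.sum_antidiagonal_eq_sum_range_succ (fun i _ => f (i + m)) n,
    ← Finset.Ico_add_one_right_eq_Icc, Finset.sum_Ico_eq_sum_range]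
  rw [show m + n + 1 - m = n + 1 by omega]
  exact sum_congr rfl fun i _ => by rw [add_comm]

theorem lhs_eq (s : ℕ) : (∑ a ∈ Finset.Icc 2 (s + 5 - 3), ∑ b ∈ Finset.Icc 1 (s + 5 - a - 2),
      ∑ c ∈ Finset.Icc 1 (s + 5 - a - b - 1),
        (2 : ℝ) ^ (a + c) * ((2 : ℝ) ^ (a - 1) * (3 : ℝ) ^ b - (3 : ℝ) ^ b - 1) *
          mzv ![a, b, c, s + 5 - a - b - c]) =
    12 * Cf (fun j => 4 ^ (j + 1) - 2 ^ (j + 1)) 3 2 1 s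
      - 4 * Cf (fun j => 2 ^ (j + 1) - 0 ^ (j + 1)) 1 2 1 s := by
  unfold Cf
  rw [show s + 5 - 3 = 2 + s by omega, Icc_anti, mul_sum, mul_sum, ← sum_sub_distrib]
  refine sum_congr rfl fun z hz => ?_
  have hz' := mem_antidiagonal.mp hz
  rw [show s + 5 - (z.1 + 2) - 2 = 1 + z.2 by omega, Icc_anti, mul_sum, mul_sum, ← sum_sub_distrib]
  refine sum_congr rfl fun y hy => ?_
  have hy' := mem_antidiagonal.mp hy
  rw [show s + 5 - (z.1 + 2) - (y.1 + 1) - 1 = 1 + y.2 by omega, Icc_anti, mul_sum, mul_sum,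
    ← sum_sub_distrib]
  refine sum_congr rfl fun t ht => ?_
  have ht' := mem_antidiagonal.mp ht
  rw [show s + 5 - (z.1 + 2) - (y.1 + 1) - (t.1 + 1) = t.2 + 1 by omega,
    show z.1 + 2 - 1 = z.1 + 1 by omega]
  have h4 : (4 : ℝ) ^ (z.1 + 1) = 2 ^ (z.1 + 1) * 2 ^ (z.1 + 1) := by
    rw [← mul_pow]; norm_num
  simp only [h4, one_pow, zero_pow (Nat.succ_ne_zero _)]
  ring

theorem weighted_sum_depth4_432 (w : ℕ) (hw : 5 ≤ w) :
    (∑ a ∈ Finset.Icc 2 (w - 3), ∑ b ∈ Finset.Icc 1 (w - a - 2),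
      ∑ c ∈ Finset.Icc 1 (w - a - b - 1),
        (2 : ℝ) ^ (a + c) * ((2 : ℝ) ^ (a - 1) * (3 : ℝ) ^ b - (3 : ℝ) ^ b - 1) *
          mzv ![a, b, c, w - a - b - c])
    = (2 + ((w : ℝ) - 3) * ((w : ℝ) + 2) * ((w : ℝ) + 7) / 12) * mzv ![w] := by
  obtain ⟨s, rfl⟩ : ∃ s, w = s + 5 := ⟨w - 5, by omega⟩
  rw [lhs_eq]
  refine sub_eq_zero.mp (coeff_uniq (c := fun s =>
    (12 * Cf (fun j => 4 ^ (j + 1) - 2 ^ (j + 1)) 3 2 1 s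
      - 4 * Cf (fun j => 2 ^ (j + 1) - 0 ^ (j + 1)) 1 2 1 s) -
    (2 + (((s + 5 : ℕ) : ℝ) - 3) * (((s + 5 : ℕ) : ℝ) + 2) * (((s + 5 : ℕ) : ℝ) + 7) / 12) *
      mzv ![s + 5]) (fun x hx => ?_) s)
  have b1 := Pc_bd (c := 1) (by norm_num) (by norm_num)
  have b2 := Pc_bd (c := 2) (by norm_num) (by norm_num)
  have b3 := Pc_bd (c := 3) (by norm_num) (by norm_num)
  have c2 := (b2.mul b1.pre).pre
  have s1 := ((Pc_sub_bd (c := 4) (e := 2) (by norm_num) (by norm_num) (by norm_num)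
    (by norm_num)).mul (b3.mul c2).pre).summable le_rfl (by norm_num) hx
  have s2 := ((Pc_sub_bd (c := 2) (e := 0) (by norm_num) (by norm_num) (by norm_num)
    (by norm_num)).mul (b1.mul c2).pre).summable le_rfl (by norm_num) hx
  have p1 := part_series hx (u := fun j => 4 ^ (j + 1) - 2 ^ (j + 1)) (fun j => by
      have : (2 : ℝ) ^ (j + 1) ≤ 4 ^ (j + 1) := by gcongr; norm_num
      linarith) (Pc_sub_geo (by norm_num) (by norm_num) (by norm_num) (by norm_num) hx)
    (by norm_num) (by norm_num) (by norm_num) (by norm_num) (by norm_num) (by norm_num) s1.hasSum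
  have p2 := part_series hx (u := fun j => 2 ^ (j + 1) - 0 ^ (j + 1)) (fun j => by
      simp) (Pc_sub_geo (by norm_num) (by norm_num) (by norm_num) (by norm_num) hx)
    (by norm_num) (by norm_num) (by norm_num) (by norm_num) (by norm_num) (by norm_num) s2.hasSum
  have hG := PS.G_series hx
  have hG2 := (s1.hasSum.mul_left 12).sub (s2.hasSum.mul_left 4)
  have hval := (hG.cg (fun k => by ring) rfl).unique hG2
  have hr := rhs_series hx (G_value hx)
  have hfin := ((p1.mul_left 12).sub (p2.mul_left 4)).sub hr
  have h0 : HasSum (fun n => (fun s =>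
    (12 * Cf (fun j => 4 ^ (j + 1) - 2 ^ (j + 1)) 3 2 1 s
      - 4 * Cf (fun j => 2 ^ (j + 1) - 0 ^ (j + 1)) 1 2 1 s) -
    (2 + (((s + 5 : ℕ) : ℝ) - 3) * (((s + 5 : ℕ) : ℝ) + 2) * (((s + 5 : ℕ) : ℝ) + 7) / 12) *
      mzv ![s + 5]) n * x ^ (n + 1)) 0 :=
    hfin.cg (fun n => by ring) (by rw [hval]; ring)
  have hx0 := hx.1
  refine (h0.mul_left x⁻¹).cg (fun n => ?_) (by simp)
  rw [pow_succ]; field_simp
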